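/- arXiv:2605.21877 — 4 statements merged into one kernel-verified Lean document; each statement's English description precedes it below -/
import Mathlib

section
/- Let F := K4⁻ × F*. Then the Turán density of F equals 2/9; that is, ex(n,{F})/C(n,3) → 2/9 as n → ∞. Equivalently: for every ε > 0 there is N such that for all n ≥ N, (2/9 − ε)·C(n,3) ≤ ex(n,{F}) ≤ (2/9 + ε)·C(n,3). -/
open scoped Classical

/-- A collection of finite edge sets is a 3-graph if every edge has exactly 3 vertices. -/
def IsThreeGraph {α : Type*} (H : Set (Finset α)) : Prop := ∀ e ∈ H, e.card = 3

/-- `φ` is a homomorphism of 3-graphs from `G` to `H`: the image of every edge of `G`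
is a 3-element set that is an edge of `H`. -/
def IsHomOn {α β : Type*} (G : Set (Finset α)) (H : Set (Finset β)) (φ : α → β) : Prop :=
  ∀ e ∈ G, (e.image φ).card = 3 ∧ e.image φ ∈ H

/-- `H` contains a subgraph isomorphic to `G`. -/
def ContainsCopy {α β : Type*} (G : Set (Finset α)) (H : Set (Finset β)) : Prop :=
  ∃ φ : α → β, Function.Injective φ ∧ ∀ e ∈ G, e.image φ ∈ H

/-- `K4⁻`, on vertices `a=0, b=1, c=2, d=3`, with edges `abc, abd, acd`. -/
def K4minus : Set (Finset (Fin 4)) := {{0,1,2}, {0,1,3}, {0,2,3}}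

/-- `F*`, on vertices `1,…,7` (represented by `0,…,6`), with edges `123, 124, 345, 156, 257`. -/
def Fstar : Set (Finset (Fin 7)) := {{0,1,2}, {0,1,3}, {2,3,4}, {0,4,5}, {1,4,6}}

/-- The categorical product of two 3-graphs: a 3-element set of pairs is an edge iff
its set of first coordinates is an edge of `G` and its set of second coordinates is an
edge of `H`. -/
def ProdGraph {α β : Type*} (G : Set (Finset α)) (H : Set (Finset β)) :
    Set (Finset (α × β)) :=
  {e | e.card = 3 ∧ e.image Prod.fst ∈ G ∧ e.image Prod.snd ∈ H}

/-- The 3-graph `F := K4⁻ × F*`. -/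
def F : Set (Finset (Fin 4 × Fin 7)) := ProdGraph K4minus Fstar

/-- `ex(n, {F})`: the maximum number of edges of an `n`-vertex 3-graph containing no
subgraph isomorphic to `F`. -/
noncomputable def exF (n : ℕ) : ℕ :=
  sSup {k | ∃ H : Set (Finset (Fin n)), IsThreeGraph H ∧ ¬ ContainsCopy F H ∧ H.ncard = k}

def KR (a b c : Fin 4) : Prop := ({a, b, c} : Finset (Fin 4)) ∈ K4minus
def SR (a b c : Fin 7) : Prop := ({a, b, c} : Finset (Fin 7)) ∈ Fstar
def FR (u v w : Fin 4 × Fin 7) : Prop := KR u.1 v.1 w.1 ∧ SR u.2 v.2 w.2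

lemma mem_K (e : Finset (Fin 4)) : e ∈ K4minus ↔ e = {0,1,2} ∨ e = {0,1,3} ∨ e = {0,2,3} := by
  simp [K4minus]
lemma mem_S (e : Finset (Fin 7)) : e ∈ Fstar ↔
    e = {0,1,2} ∨ e = {0,1,3} ∨ e = {2,3,4} ∨ e = {0,4,5} ∨ e = {1,4,6} := by
  simp [Fstar]

lemma mem_F_of_FR {u v w} (h : FR u v w) : ({u, v, w} : Finset (Fin 4 × Fin 7)) ∈ F := by
  obtain ⟨h1, h2⟩ := h
  have hc : ({u.1, v.1, w.1} : Finset (Fin 4)).card = 3 := by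
    rcases (mem_K _).1 h1 with h | h | h <;> rw [h] <;> rfl
  refine ⟨?_, ?_, ?_⟩
  · apply le_antisymm Finset.card_le_three
    calc 3 = ({u.1, v.1, w.1} : Finset (Fin 4)).card := hc.symm
      _ = (({u, v, w} : Finset (Fin 4 × Fin 7)).image Prod.fst).card := by
        congr 1; ext x; simp
      _ ≤ _ := Finset.card_image_le
  · unfold KR at h1; convert h1 using 1
    ext x; simp
  · unfold SR at h2; convert h2 using 1
    ext x; simp

lemma exists_of_mem_F {e} (h : e ∈ F) : ∃ u v w, e = {u, v, w} ∧ FR u v w := by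
  obtain ⟨h0, h1, h2⟩ := h
  obtain ⟨u, v, w, -, -, -, rfl⟩ := Finset.card_eq_three.1 h0
  refine ⟨u, v, w, rfl, ?_, ?_⟩
  · unfold KR; convert h1 using 1
    ext x; simp
  · unfold SR; convert h2 using 1
    ext x; simp

lemma sym_of_eq {α V : Type*} [DecidableEq α] {R : V → V → V → Prop}
    (h1 : ∀ a b c, R a b c → R b a c) (h2 : ∀ a b c, R a b c → R a c b)
    (g : α → V) {a b c p q r : α} (hpq : p ≠ q) (hpr : p ≠ r) (hqr : q ≠ r)
    (h : ({a, b, c} : Finset α) = {p, q, r}) (hR : R (g p) (g q) (g r)) :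
    R (g a) (g b) (g c) := by
  have ha : a ∈ ({p, q, r} : Finset α) := h ▸ by simp
  have hb : b ∈ ({p, q, r} : Finset α) := h ▸ by simp
  have hc : c ∈ ({p, q, r} : Finset α) := h ▸ by simp
  have hp : p ∈ ({a, b, c} : Finset α) := h ▸ by simp
  have hq : q ∈ ({a, b, c} : Finset α) := h ▸ by simp
  have hr : r ∈ ({a, b, c} : Finset α) := h ▸ by simp
  simp only [Finset.mem_insert, Finset.mem_singleton] at ha hb hc hp hq hr
  rcases ha with rfl | rfl | rfl <;> rcases hb with rfl | rfl | rfl <;>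
    rcases hc with rfl | rfl | rfl <;> first | (exfalso; tauto) | skip
  · exact hR
  · exact h2 _ _ _ hR
  · exact h1 _ _ _ hR
  · exact h2 _ _ _ (h1 _ _ _ hR)
  · exact h1 _ _ _ (h2 _ _ _ hR)
  · exact h1 _ _ _ (h2 _ _ _ (h1 _ _ _ hR))

/-- A homomorphism from `F` to a ternary relation. -/
def FHom {V : Type*} (R : V → V → V → Prop) (φ : Fin 4 × Fin 7 → V) : Prop :=
  ∀ u v w, FR u v w → R (φ u) (φ v) (φ w)

lemma fhom_of_K {V : Type*} {R : V → V → V → Prop}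
    (h1 : ∀ a b c, R a b c → R b a c) (h2 : ∀ a b c, R a b c → R a c b)
    (x y z t : V) (ha : R x y z) (hb : R x y t) (hc : R x z t) : ∃ φ, FHom R φ := by
  refine ⟨fun u => ![x, y, z, t] u.1, ?_⟩
  rintro u v w ⟨h, -⟩
  rcases (mem_K _).1 h with h | h | h
  · exact sym_of_eq h1 h2 ![x, y, z, t] (by decide) (by decide) (by decide) h ha
  · exact sym_of_eq h1 h2 ![x, y, z, t] (by decide) (by decide) (by decide) h hb
  · exact sym_of_eq h1 h2 ![x, y, z, t] (by decide) (by decide) (by decide) h hc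

lemma fhom_of_S {V : Type*} {R : V → V → V → Prop}
    (h1 : ∀ a b c, R a b c → R b a c) (h2 : ∀ a b c, R a b c → R a c b)
    (a b c d e f g : V) (ha : R a b c) (hb : R a b d) (hc : R c d e) (hd : R a e f)
    (he : R b e g) : ∃ φ, FHom R φ := by
  refine ⟨fun u => ![a, b, c, d, e, f, g] u.2, ?_⟩
  rintro u v w ⟨-, h⟩
  rcases (mem_S _).1 h with h | h | h | h | h
  · exact sym_of_eq h1 h2 ![a, b, c, d, e, f, g] (by decide) (by decide) (by decide) h ha
  · exact sym_of_eq h1 h2 ![a, b, c, d, e, f, g] (by decide) (by decide) (by decide) h hb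
  · exact sym_of_eq h1 h2 ![a, b, c, d, e, f, g] (by decide) (by decide) (by decide) h hc
  · exact sym_of_eq h1 h2 ![a, b, c, d, e, f, g] (by decide) (by decide) (by decide) h hd
  · exact sym_of_eq h1 h2 ![a, b, c, d, e, f, g] (by decide) (by decide) (by decide) h he

def RB (x y z : Fin 3) : Prop := x ≠ y ∧ x ≠ z ∧ y ≠ z

def rb (x y z : Fin 3) : Bool := x != y && x != z && y != z

lemma rb_iff (x y z : Fin 3) : rb x y z = true ↔ RB x y z := by
  simp [rb, RB, and_assoc]

lemma grid_dec : ∀ a e i : Fin 3, rb a e i = true →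
    ∀ b d : Fin 3, rb b d i = true →
    ∀ c g : Fin 3, rb c e g = true →
    ∀ f h : Fin 3, rb a f h = true →
    rb b f g = true → rb c d h = true →
    (rb a b c || rb a d g) = true := by
  decide

lemma four_dec : ∀ a b c d : Fin 3, a ≠ b → a ≠ c → b ≠ c → a ≠ d → b ≠ d → c ≠ d → False := by
  intros; omega

lemma grid (c : Fin 4 × Fin 7 → Fin 3) (hc : FHom RB c) {a1 a2 a3 : Fin 4} {b1 b2 b3 : Fin 7}
    (ha : ({a1, a2, a3} : Finset (Fin 4)) ∈ K4minus)
    (hb : ({b1, b2, b3} : Finset (Fin 7)) ∈ Fstar) :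
    RB (c (a1, b1)) (c (a1, b2)) (c (a1, b3)) ∨ RB (c (a1, b1)) (c (a2, b1)) (c (a3, b1)) := by
  have p1 : ({b1, b3, b2} : Finset (Fin 7)) ∈ Fstar := by
    convert hb using 1; ext; simp; tauto
  have p2 : ({b2, b1, b3} : Finset (Fin 7)) ∈ Fstar := by
    convert hb using 1; ext; simp; tauto
  have p3 : ({b2, b3, b1} : Finset (Fin 7)) ∈ Fstar := by
    convert hb using 1; ext; simp; tauto
  have p4 : ({b3, b1, b2} : Finset (Fin 7)) ∈ Fstar := by
    convert hb using 1; ext; simp; tauto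
  have p5 : ({b3, b2, b1} : Finset (Fin 7)) ∈ Fstar := by
    convert hb using 1; ext; simp; tauto
  have q0 := hc (a1, b1) (a2, b2) (a3, b3) ⟨ha, hb⟩
  have q1 := hc (a1, b1) (a2, b3) (a3, b2) ⟨ha, p1⟩
  have q2 := hc (a1, b2) (a2, b1) (a3, b3) ⟨ha, p2⟩
  have q3 := hc (a1, b2) (a2, b3) (a3, b1) ⟨ha, p3⟩
  have q4 := hc (a1, b3) (a2, b1) (a3, b2) ⟨ha, p4⟩
  have q5 := hc (a1, b3) (a2, b2) (a3, b1) ⟨ha, p5⟩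
  rw [← rb_iff] at q0 q1 q2 q3 q4 q5
  have := grid_dec _ _ _ q0 _ _ q2 _ _ q5 _ _ q1 q3 q4
  rwa [Bool.or_eq_true, rb_iff, rb_iff] at this

lemma not_RB (c : Fin 4 × Fin 7 → Fin 3) : ¬ FHom RB c := by
  intro hc
  have key : ∀ b1 b2 b3 : Fin 7, ({b1, b2, b3} : Finset (Fin 7)) ∈ Fstar →
      RB (c (0, b1)) (c (0, b2)) (c (0, b3)) := by
    intro b1 b2 b3 hb
    rcases grid c hc (a1 := 0) (a2 := 1) (a3 := 2) (by simp [mem_K]) hb with h | h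
    · exact h
    rcases grid c hc (a1 := 0) (a2 := 1) (a3 := 3) (by simp [mem_K]) hb with h' | h'
    · exact h'
    rcases grid c hc (a1 := 0) (a2 := 2) (a3 := 3) (by simp [mem_K]) hb with h'' | h''
    · exact h''
    exact (four_dec _ _ _ _ h.1 h.2.1 h.2.2 h'.2.1 h'.2.2 h''.2.2).elim
  have k1 := key 0 1 2 (by simp [mem_S])
  have k2 := key 0 1 3 (by simp [mem_S])
  have k3 := key 2 3 4 (by simp [mem_S])
  exact four_dec _ _ _ _ k1.1 k1.2.1 k1.2.2 k2.2.1 k2.2.2 k3.1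
noncomputable def wt {V : Type*} (R : V → V → V → Prop) (a b c : V) : ℝ := if R a b c then 1 else 0

noncomputable def P {V : Type*} [Fintype V] (R : V → V → V → Prop) (x y z : V → ℝ) : ℝ :=
  ∑ a, ∑ b, ∑ c, wt R a b c * x a * y b * z c

section Lag
variable {V : Type*} [Fintype V] {R : V → V → V → Prop}

lemma P_add (x x' y z : V → ℝ) : P R (x + x') y z = P R x y z + P R x' y z := by
  simp only [P, ← Finset.sum_add_distrib]
  refine Finset.sum_congr rfl fun a _ => Finset.sum_congr rfl fun b _ =>
    Finset.sum_congr rfl fun c _ => ?_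
  simp only [Pi.add_apply]; ring

lemma P_smul (s : ℝ) (x y z : V → ℝ) : P R (s • x) y z = s * P R x y z := by
  simp only [P, Finset.mul_sum]
  refine Finset.sum_congr rfl fun a _ => Finset.sum_congr rfl fun b _ =>
    Finset.sum_congr rfl fun c _ => ?_
  simp only [Pi.smul_apply, smul_eq_mul]; ring

lemma P_swap (h1 : ∀ a b c, R a b c → R b a c) (x y z : V → ℝ) : P R x y z = P R y x z := by
  unfold P
  rw [Finset.sum_comm]
  refine Finset.sum_congr rfl fun a _ => Finset.sum_congr rfl fun b _ =>
    Finset.sum_congr rfl fun c _ => ?_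
  have : wt R b a c = wt R a b c := by
    unfold wt; simp only [show R b a c ↔ R a b c from ⟨h1 _ _ _, h1 _ _ _⟩]
  rw [this]; ring

lemma P_swap' (h2 : ∀ a b c, R a b c → R a c b) (x y z : V → ℝ) : P R x y z = P R x z y := by
  unfold P
  refine Finset.sum_congr rfl fun a _ => ?_
  rw [Finset.sum_comm]
  refine Finset.sum_congr rfl fun b _ =>
    Finset.sum_congr rfl fun c _ => ?_
  have : wt R a c b = wt R a b c := by
    unfold wt; simp only [show R a c b ↔ R a b c from ⟨h2 _ _ _, h2 _ _ _⟩]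
  rw [this]; ring

lemma P_expand (h1 : ∀ a b c, R a b c → R b a c) (h2 : ∀ a b c, R a b c → R a c b)
    (x v : V → ℝ) : P R (x + v) (x + v) (x + v) =
      P R x x x + 3 * P R v x x + 3 * P R v v x + P R v v v := by
  have A2 : ∀ p q q' r, P R p (q + q') r = P R p q r + P R p q' r := by
    intro p q q' r
    rw [P_swap h1, P_add, P_swap h1 q, P_swap h1 q']
  have A3 : ∀ p q r r', P R p q (r + r') = P R p q r + P R p q r' := by
    intro p q r r'
    rw [P_swap' h2, A2, P_swap' h2 p r, P_swap' h2 p r']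
  simp only [P_add, A2, A3]
  have e1 : P R x v x = P R v x x := P_swap h1 _ _ _
  have e2 : P R x x v = P R v x x := by rw [P_swap' h2, e1]
  have e3 : P R v x v = P R v v x := P_swap' h2 _ _ _
  have e4 : P R x v v = P R v v x := by rw [P_swap h1, e3]
  rw [e1, e2, e3, e4]; ring

lemma P_single (i : V) (y z : V → ℝ) :
    P R (Pi.single i 1) y z = ∑ b, ∑ c, wt R i b c * y b * z c := by
  unfold P
  rw [Finset.sum_eq_single i]
  · simp
  · intro a _ ha
    simp [Pi.single_eq_of_ne ha]
  · simp

lemma P_single2 (i j : V) (z : V → ℝ) :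
    P R (Pi.single i 1) (Pi.single j 1) z = ∑ c, wt R i j c * z c := by
  rw [P_single]
  rw [Finset.sum_eq_single j]
  · simp
  · intro a _ ha
    simp [Pi.single_eq_of_ne ha]
  · simp

lemma P_diag (h0 : ∀ a b c, R a b c → a ≠ b) (i : V) (z : V → ℝ) :
    P R (Pi.single i 1) (Pi.single i 1) z = 0 := by
  rw [P_single2]
  refine Finset.sum_eq_zero fun c _ => ?_
  have : ¬ R i i c := fun h => h0 _ _ _ h rfl
  simp [wt, this]

lemma P_nonneg {x y z : V → ℝ} (hx : ∀ i, 0 ≤ x i) (hy : ∀ i, 0 ≤ y i) (hz : ∀ i, 0 ≤ z i) :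
    0 ≤ P R x y z := by
  refine Finset.sum_nonneg fun a _ => Finset.sum_nonneg fun b _ => Finset.sum_nonneg fun c _ => ?_
  have : 0 ≤ wt R a b c := by unfold wt; split_ifs <;> norm_num
  have := hx a; have := hy b; have := hz c
  positivity

lemma P_cont : Continuous fun x : V → ℝ => P R x x x := by
  unfold P; fun_prop

lemma P_hom (h1 : ∀ a b c, R a b c → R b a c) (h2 : ∀ a b c, R a b c → R a c b)
    (s : ℝ) (x : V → ℝ) : P R (s • x) (s • x) (s • x) = s ^ 3 * P R x x x := by
  rw [P_smul, P_swap h1, P_smul, P_swap' h2, P_swap h1, P_smul]; ring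

/-- homogeneous consequence of maximality -/
lemma max_hom (h1 : ∀ a b c, R a b c → R b a c) (h2 : ∀ a b c, R a b c → R a c b)
    {M : ℝ} (hM : ∀ y ∈ stdSimplex ℝ V, P R y y y ≤ M)
    (y : V → ℝ) (hy : ∀ i, 0 ≤ y i) (hs : 0 < ∑ i, y i) :
    P R y y y ≤ M * (∑ i, y i) ^ 3 := by
  set S := ∑ i, y i with hS
  have := hM (S⁻¹ • y) ⟨fun i => by have := hy i; simp; positivity, by
    simp only [Pi.smul_apply, smul_eq_mul, ← Finset.mul_sum]
    rw [← hS]; field_simp⟩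
  rw [P_hom h1 h2] at this
  have h3 : 0 < S ^ 3 := by positivity
  rw [inv_pow, inv_mul_le_iff₀ h3] at this
  linarith

lemma deriv_ge (h0 : ∀ a b c, R a b c → a ≠ b)
    (h1 : ∀ a b c, R a b c → R b a c) (h2 : ∀ a b c, R a b c → R a c b)
    {x : V → ℝ} (hx : x ∈ stdSimplex ℝ V)
    (hM : ∀ y ∈ stdSimplex ℝ V, P R y y y ≤ P R x x x) (i : V) (hi : 0 < x i) :
    P R x x x ≤ P R (Pi.single i 1) x x := by
  set M := P R x x x with hMdef
  set D := P R (Pi.single i 1) x x with hD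
  have hM0 : 0 ≤ M := P_nonneg hx.1 hx.1 hx.1
  have key : ∀ s : ℝ, 0 < s → s ≤ x i → s < 1 → M * (1 - s) ≤ D := by
    intro s hs hsx hs1
    have hsum : ∑ j, (x + (-s) • (Pi.single i 1 : V → ℝ)) j = 1 - s := by
      simp only [Pi.add_apply, Pi.smul_apply, smul_eq_mul, Finset.sum_add_distrib, hx.2,
        ← Finset.mul_sum]
      simp
      ring
    have := max_hom h1 h2 hM (x + (-s) • (Pi.single i 1 : V → ℝ)) (by
      intro j
      by_cases hj : j = i
      · subst hj; simp; linarith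
      · simp [Pi.single_eq_of_ne hj]; exact hx.1 j) (by rw [hsum]; linarith)
    rw [hsum, P_expand h1 h2, P_smul, P_smul, P_smul, P_swap h1 _ (_ • _), P_smul, P_diag h0,
      P_swap h1 _ (_ • _), P_smul, P_diag h0] at this
    rw [← hD, ← hMdef] at this
    have h3 : s * (3 * M - 3 * M * s + M * s ^ 2 - 3 * D) ≤ 0 := by linarith
    have h4 : 3 * M - 3 * M * s + M * s ^ 2 - 3 * D ≤ 0 := by
      by_contra hc
      push Not at hc
      nlinarith [mul_pos hs hc]
    nlinarith [mul_nonneg hM0 (sq_nonneg s)]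
  by_contra hlt
  push Not at hlt
  have hMpos : 0 < M := by
    have : 0 ≤ D := P_nonneg (fun j => by by_cases hj : j = i <;> simp [Pi.single_apply, hj]) hx.1 hx.1
    linarith
  set s := min (min (x i) (1/2)) ((M - D) / (2 * M)) with hs
  have hspos : 0 < s := by
    have : 0 < (M - D) / (2 * M) := by apply div_pos <;> linarith
    simp [hs, hi, this]
  have hs1 : s ≤ x i := (min_le_left _ _).trans (min_le_left _ _)
  have hs2 : s ≤ 1/2 := (min_le_left _ _).trans (min_le_right _ _)
  have hs3 : s ≤ (M - D) / (2 * M) := min_le_right _ _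
  have := key s hspos hs1 (by linarith)
  rw [le_div_iff₀ (by linarith)] at hs3
  nlinarith

lemma covered (h0 : ∀ a b c, R a b c → a ≠ b)
    (h1 : ∀ a b c, R a b c → R b a c) (h2 : ∀ a b c, R a b c → R a c b)
    {x : V → ℝ} (hx : x ∈ stdSimplex ℝ V)
    (hM : ∀ y ∈ stdSimplex ℝ V, P R y y y ≤ P R x x x)
    (hmin : ∀ y ∈ stdSimplex ℝ V, P R x x x ≤ P R y y y →
      (Finset.univ.filter fun i => 0 < x i).card ≤ (Finset.univ.filter fun i => 0 < y i).card)
    (i j : V) (hi : 0 < x i) (hj : 0 < x j) (hij : i ≠ j) : ∃ k, 0 < x k ∧ R i j k := by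
  by_contra hno
  push Not at hno
  wlog hD : P R (Pi.single j 1) x x ≤ P R (Pi.single i 1) x x generalizing i j
  · exact this j i hj hi hij.symm (fun k hk h => hno k hk (h1 _ _ _ h)) (le_of_not_ge hD)
  set ei : V → ℝ := Pi.single i 1 with hei
  set ej : V → ℝ := Pi.single j 1 with hej
  have hP : P R ei ej x = 0 := by
    rw [P_single2]
    refine Finset.sum_eq_zero fun c _ => ?_
    rcases (hx.1 c).eq_or_lt with h | h
    · simp [← h]
    · simp [wt, hno c h]
  set t := x j with ht
  have hvv : ∀ z, P R (t • ei + (-t) • ej) (t • ei + (-t) • ej) z = - 2 * t ^ 2 * P R ei ej z := by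
    intro z
    rw [P_add, P_smul, P_smul, P_swap h1 ei, P_swap h1 ej, P_add, P_add, P_smul, P_smul, P_smul,
      P_smul, P_diag h0, P_diag h0, P_swap h1 ej ei]
    ring
  have hvvv : P R (t • ei + (-t) • ej) (t • ei + (-t) • ej) (t • ei + (-t) • ej) = 0 := by
    rw [hvv, P_swap' h2, P_swap h1, P_add, P_smul, P_smul, P_diag h0, P_swap' h2 ej, P_diag h0]
    ring
  have hy := P_expand h1 h2 x (t • ei + (-t) • ej)
  rw [hvvv, hvv, hP, P_add (t • ei), P_smul, P_smul] at hy
  set y := x + (t • ei + (-t) • ej) with hydef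
  have hyi : ∀ k, y k = if k = i then x i + x j else if k = j then 0 else x k := by
    intro k
    by_cases hki : k = i
    · subst hki; simp [hydef, hei, hej, hij, Pi.single_apply, ht]
    · by_cases hkj : k = j
      · subst hkj; simp [hydef, hei, hej, hki, Pi.single_apply, ht]
      · simp [hydef, hei, hej, hki, hkj, Pi.single_apply]
  have hyS : y ∈ stdSimplex ℝ V := by
    refine ⟨fun k => ?_, ?_⟩
    · rw [hyi]; split_ifs
      · linarith
      · exact le_rfl
      · exact hx.1 k
    · simp only [hydef, Pi.add_apply, Pi.smul_apply, smul_eq_mul, Finset.sum_add_distrib, hx.2,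
        ← Finset.mul_sum]
      simp [hei, hej]
  have := hmin y hyS (by rw [hy]; nlinarith)
  refine absurd this (not_le.2 (Finset.card_lt_card ?_))
  refine Finset.ssubset_iff_subset_ne.2 ⟨?_, ?_⟩
  · intro k hk
    simp only [Finset.mem_filter, Finset.mem_univ, true_and] at hk ⊢
    rw [hyi] at hk
    split_ifs at hk with h h'
    · rwa [h]
    · exact (lt_irrefl _ hk).elim
    · exact hk
  · intro h
    have : j ∈ Finset.univ.filter fun i => 0 < y i := by rw [h]; simp; exact hj
    simp [hyi, hij.symm] at this

theorem lag (h0 : ∀ a b c, R a b c → a ≠ b)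
    (h1 : ∀ a b c, R a b c → R b a c) (h2 : ∀ a b c, R a b c → R a c b)
    (hF : ¬ ∃ φ, FHom R φ) (x₀ : V → ℝ) (hx₀ : x₀ ∈ stdSimplex ℝ V) :
    P R x₀ x₀ x₀ ≤ 2 / 9 := by
  obtain ⟨x₁, hx₁, hmax₁⟩ := (isCompact_stdSimplex ℝ V).exists_isMaxOn ⟨x₀, hx₀⟩
    (P_cont (R := R)).continuousOn
  obtain ⟨x, ⟨hx, hM⟩, hmin⟩ := (measure fun y : V → ℝ =>
    (Finset.univ.filter fun i => 0 < y i).card).wf.has_min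
    {x | x ∈ stdSimplex ℝ V ∧ ∀ y ∈ stdSimplex ℝ V, P R y y y ≤ P R x x x}
    ⟨x₁, hx₁, fun y hy => hmax₁ hy⟩
  have hcov := covered h0 h1 h2 hx hM (fun y hy hle => by
    have := hmin y ⟨hy, fun z hz => (hM z hz).trans hle⟩
    exact not_lt.1 this)
  have hlin : ∀ a b c d, 0 < x a → 0 < x b → 0 < x c → 0 < x d → R a b c → R a b d → c = d := by
    intro a b c d ha hb hc hd hc' hd'
    by_contra hcd
    obtain ⟨e, he, hR⟩ := hcov c d hc hd hcd
    by_cases hae : a = e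
    · subst hae
      exact hF (fhom_of_K h1 h2 a b c d hc' hd' (h1 _ _ _ (h2 _ _ _ hR)))
    by_cases hbe : b = e
    · subst hbe
      exact hF (fhom_of_K h1 h2 b a c d (h1 _ _ _ hc') (h1 _ _ _ hd') (h1 _ _ _ (h2 _ _ _ hR)))
    obtain ⟨f, -, hf⟩ := hcov a e ha he hae
    obtain ⟨g, -, hg⟩ := hcov b e hb he hbe
    exact hF (fhom_of_S h1 h2 a b c d e f g hc' hd' hR hf hg)
  have hne : (Finset.univ : Finset V).Nonempty := by
    by_contra h
    rw [Finset.not_nonempty_iff_eq_empty] at h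
    have := hx.2
    rw [h] at this
    simp at this
  obtain ⟨i, -, hi⟩ := Finset.exists_max_image Finset.univ x hne
  have hi : ∀ j, x j ≤ x i := fun j => hi j (Finset.mem_univ _)
  have hpos : 0 < x i := by
    by_contra h
    have : ∑ j, x j ≤ 0 := Finset.sum_nonpos fun j _ => (hi j).trans (not_lt.1 h)
    rw [hx.2] at this
    linarith
  have hD := deriv_ge h0 h1 h2 hx hM i hpos
  have hfin := (hM x₀ hx₀).trans hD
  rw [P_single] at hfin
  -- sums over the link
  set u : V → V → ℝ := fun b c => if R i b c ∧ 0 < x b ∧ 0 < x c then 1 else 0 with hu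
  have hu0 : ∀ b c, 0 ≤ u b c := by intro b c; simp only [hu]; split_ifs <;> norm_num
  have husym : ∀ b c, u b c = u c b := by
    intro b c
    have : (R i b c ∧ 0 < x b ∧ 0 < x c) ↔ (R i c b ∧ 0 < x c ∧ 0 < x b) :=
      ⟨fun h => ⟨h2 _ _ _ h.1, h.2.2, h.2.1⟩, fun h => ⟨h2 _ _ _ h.1, h.2.2, h.2.1⟩⟩
    simp only [hu, this]
  have hone : ∀ b, ∑ c, u b c ≤ 1 := by
    intro b
    by_cases hex : ∃ c, R i b c ∧ 0 < x b ∧ 0 < x c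
    · obtain ⟨c, hc⟩ := hex
      rw [Finset.sum_eq_single c]
      · simp [hu, hc]
      · intro d _ hd
        have : ¬ (R i b d ∧ 0 < x b ∧ 0 < x d) := fun hR =>
          hd (hlin i b d c hpos hc.2.1 hR.2.2 hc.2.2 hR.1 hc.1)
        simp only [hu, this, if_false]
      · simp
    · push Not at hex
      rw [Finset.sum_eq_zero]
      · norm_num
      · intro d _
        have : ¬ (R i b d ∧ 0 < x b ∧ 0 < x d) := fun h => absurd h.2.2 (not_lt.2 (hex d h.1 h.2.1))
        simp only [hu, this, if_false]
  have hsum1 : ∑ b ∈ Finset.univ.erase i, x b = 1 - x i := by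
    rw [← hx.2, ← Finset.add_sum_erase Finset.univ x (Finset.mem_univ i)]; ring
  have hle1 : x i ≤ 1 := by
    have := Finset.sum_nonneg fun b (_ : b ∈ Finset.univ.erase i) => hx.1 b
    linarith
  have hbc : ∀ b c, R i b c → x b + x c ≤ 1 - x i := by
    intro b c h
    have hib := h0 _ _ _ h
    have hic := h0 _ _ _ (h2 _ _ _ h)
    have hbc := h0 _ _ _ (h2 _ _ _ (h1 _ _ _ h))
    rw [← hsum1, ← Finset.sum_pair hbc]
    apply Finset.sum_le_sum_of_subset_of_nonneg
    · intro k; simp; rintro (rfl | rfl) <;> [exact hib.symm; exact hic.symm]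
    · intro k _ _; exact hx.1 k
  have hmain : ∀ K, 0 ≤ K → (∀ b c, 0 < x b → 0 < x c → R i b c → x c * x b ≤ K * (x b + x c)) →
      ∑ b, ∑ c, wt R i b c * x b * x c ≤ 2 * K * (1 - x i) := by
    intro K hK h
    have hui : ∀ c, u i c = 0 := by
      intro c
      have : ¬ R i i c := fun h => h0 _ _ _ h rfl
      simp [hu, this]
    have hS : ∑ b, ∑ c, u b c * x b ≤ 1 - x i := by
      simp only [← Finset.sum_mul]
      rw [← Finset.add_sum_erase Finset.univ _ (Finset.mem_univ i), ← hsum1]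
      simp only [hui, Finset.sum_const_zero, zero_mul, zero_add]
      refine Finset.sum_le_sum fun b _ => ?_
      have := mul_le_mul_of_nonneg_right (hone b) (hx.1 b)
      linarith
    have hS' : ∑ b, ∑ c, u b c * x c ≤ 1 - x i := by
      rw [Finset.sum_comm]
      simp only [husym _ _] at hS ⊢
      refine le_trans (le_of_eq ?_) hS
      refine Finset.sum_congr rfl fun b _ => Finset.sum_congr rfl fun c _ => ?_
      rw [husym]
    have : ∑ b, ∑ c, wt R i b c * x b * x c ≤
        ∑ b, ∑ c, (K * (u b c * x b) + K * (u b c * x c)) := by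
      refine Finset.sum_le_sum fun b _ => Finset.sum_le_sum fun c _ => ?_
      by_cases hR : R i b c ∧ 0 < x b ∧ 0 < x c
      · have := h b c hR.2.1 hR.2.2 hR.1
        simp only [hu, wt, hR, and_self, if_true]
        linarith
      · have hr : 0 ≤ K * (u b c * x b) + K * (u b c * x c) := by
          have := hu0 b c; have := hx.1 b; have := hx.1 c
          positivity
        refine le_trans (le_of_eq ?_) hr
        rcases (hx.1 b).eq_or_lt with hb | hb
        · simp [← hb]
        rcases (hx.1 c).eq_or_lt with hc | hc
        · simp [← hc]
        have : ¬ R i b c := fun h => hR ⟨h, hb, hc⟩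
        simp [wt, this]
    simp only [Finset.sum_add_distrib, ← Finset.mul_sum] at this
    nlinarith
  rcases le_total (x i) (1/3) with hm | hm
  · have := hmain (x i / 2) (by linarith) (fun b c hb hc _ => by
      nlinarith [mul_le_mul_of_nonneg_right (hi b) hc.le, mul_le_mul_of_nonneg_right (hi c) hb.le])
    nlinarith
  · have := hmain ((1 - x i) / 4) (by linarith) (fun b c hb hc h => by
      nlinarith [mul_le_mul_of_nonneg_right (hbc b c h) (add_pos hb hc).le, sq_nonneg (x b - x c)])
    nlinarith
end Lag
lemma power_mean {ι : Type*} [Fintype ι] (f : ι → ℝ) (hf : ∀ i, 0 ≤ f i) (c : ℝ) (hc : 0 ≤ c)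
    (h : Fintype.card ι * c ≤ ∑ i, f i) (p : ℕ) : Fintype.card ι * c ^ p ≤ ∑ i, f i ^ p := by
  rcases p with _ | p
  · simp
  rcases isEmpty_or_nonempty ι with hι | hι
  · simp
  have hN : (0 : ℝ) < Fintype.card ι := by exact_mod_cast Fintype.card_pos
  have hp := pow_sum_div_card_le_sum_pow (s := Finset.univ) (f := f) (fun i _ => hf i) p
  refine le_trans ?_ hp
  rw [Finset.card_univ, le_div_iff₀ (by positivity)]
  refine le_trans (le_of_eq ?_) (pow_le_pow_left₀ (by positivity) h (p + 1))
  ring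

/-- number of elements of a predicate, as a real -/
noncomputable def cnt {α : Type*} [Fintype α] (A : α → Prop) : ℝ := ∑ x, if A x then 1 else 0

lemma cnt_nonneg {α : Type*} [Fintype α] (A : α → Prop) : 0 ≤ cnt A :=
  Finset.sum_nonneg fun x _ => by split_ifs <;> norm_num

lemma cnt_eq {α : Type*} [Fintype α] (A : α → Prop) :
    cnt A = ((Finset.univ.filter A).card : ℝ) := by
  simp [cnt]

lemma blowup {V T : Type*} [Fintype V] [Fintype T] [DecidableEq T] [Nonempty V] : ∀ (k : ℕ) (A : (Fin k → V) → Prop) (δ : ℝ),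
    0 ≤ δ → δ * (Fintype.card V : ℝ) ^ k ≤ cnt A →
    δ ^ (Fintype.card T ^ k) * ((Fintype.card V : ℝ) ^ Fintype.card T) ^ k ≤
      cnt (fun y : Fin k → T → V => ∀ s : Fin k → T, A (fun i => y i (s i))) := by
  intro k
  induction k with
  | zero =>
    intro A δ hδ h
    simp only [pow_zero, mul_one, pow_one] at h ⊢
    refine h.trans (le_of_eq ?_)
    unfold cnt
    simp only [Fintype.sum_unique]
    congr 1
    simp only [eq_iff_iff]
    constructor
    · intro h s; convert h
    · intro h; convert h default
  | succ k ih =>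
    intro A δ hδ h
    set N : ℝ := (Fintype.card V : ℝ) with hN
    have hN0 : 0 < N := by rw [hN]; exact_mod_cast Fintype.card_pos
    set t := Fintype.card T with ht
    -- degrees
    have hA : cnt A = ∑ x : Fin k → V, ∑ v : V, if A (Fin.cons v x) then (1:ℝ) else 0 := by
      unfold cnt
      rw [← (Fin.consEquiv (fun _ => V)).sum_comp, Fintype.sum_prod_type, Finset.sum_comm]
      rfl
    have hstep1 : Fintype.card (Fin k → V) * (δ * N) ^ t ≤
        ∑ x : Fin k → V, (∑ v : V, if A (Fin.cons v x) then (1:ℝ) else 0) ^ t := by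
      apply power_mean
      · intro x; exact cnt_nonneg _
      · positivity
      · rw [← hA]; refine le_trans (le_of_eq ?_) h
        simp; ring
    have hstep2 : ∑ x : Fin k → V, (∑ v : V, if A (Fin.cons v x) then (1:ℝ) else 0) ^ t =
        ∑ w : T → V, cnt fun x : Fin k → V => ∀ j, A (Fin.cons (w j) x) := by
      unfold cnt
      rw [Finset.sum_comm]
      refine Finset.sum_congr rfl fun x _ => ?_
      rw [ht, ← Finset.card_univ, ← Finset.prod_const, Finset.prod_univ_sum, Fintype.piFinset_univ]
      refine Finset.sum_congr rfl fun w _ => ?_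
      rw [Finset.prod_ite_zero]
      simp
    have hstep3 : ∀ w : T → V,
        ((cnt fun x : Fin k → V => ∀ j, A (Fin.cons (w j) x)) / N ^ k) ^ (t ^ k) * (N ^ t) ^ k ≤
        cnt (fun y : Fin k → T → V => ∀ s : Fin k → T, ∀ j, A (Fin.cons (w j) (fun i => y i (s i)))) := by
      intro w
      apply ih (fun x => ∀ j, A (Fin.cons (w j) x))
      · have := cnt_nonneg fun x : Fin k → V => ∀ j, A (Fin.cons (w j) x)
        positivity
      · rw [div_mul_cancel₀]; positivity
    have hB : cnt (fun y : Fin (k+1) → T → V => ∀ s : Fin (k+1) → T, A (fun i => y i (s i))) =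
        ∑ w : T → V, cnt (fun y : Fin k → T → V =>
          ∀ s : Fin k → T, ∀ j, A (Fin.cons (w j) (fun i => y i (s i)))) := by
      unfold cnt
      rw [← (Fin.consEquiv (fun _ => T → V)).sum_comp, Fintype.sum_prod_type]
      refine Finset.sum_congr rfl fun w _ => Finset.sum_congr rfl fun y _ => ?_
      congr 1
      beta_reduce
      rw [eq_iff_iff, Fin.forall_fin_succ_pi, forall_comm]
      refine forall_congr' fun s => forall_congr' fun j => ?_
      rw [← eq_iff_iff]
      congr 1
      funext i
      refine Fin.cases ?_ (fun i => ?_) i <;> simp [Fin.consEquiv]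
    rw [hB]
    refine le_trans ?_ (Finset.sum_le_sum fun w _ => hstep3 w)
    rw [← Finset.sum_mul]
    have hstep4 := power_mean (fun w : T → V =>
      (cnt fun x : Fin k → V => ∀ j, A (Fin.cons (w j) x)) / N ^ k)
      (fun w => div_nonneg (cnt_nonneg _) (by positivity)) (δ ^ t) (by positivity) (by
        rw [← Finset.sum_div, le_div_iff₀ (by positivity), ← hstep2]
        refine le_trans (le_of_eq ?_) hstep1
        simp [← hN, ← ht]; ring) (t ^ k)
    refine le_trans (le_of_eq ?_) (mul_le_mul_of_nonneg_right hstep4 (by positivity))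
    simp [← hN, ← ht]; ring

lemma inj_count {α V : Type*} [Fintype α] [DecidableEq α] [Fintype V] (c : ℝ) (hc : 0 < c)
    (hV : (Fintype.card α : ℝ) ^ 2 < c * Fintype.card V) (hα : Fintype.card α ≤ Fintype.card V)
    (B : (α → V) → Prop)
    (hB : c * (Fintype.card V : ℝ) ^ Fintype.card α ≤ cnt B) :
    ∃ y, B y ∧ Function.Injective y := by
  by_contra hno
  push Not at hno
  set N := Fintype.card V with hN
  set K := Fintype.card α with hK
  have h1 : cnt B + cnt (fun y : α → V => Function.Injective y) ≤ (N : ℝ) ^ K := by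
    unfold cnt
    rw [← Finset.sum_add_distrib]
    have : ((N : ℝ) ^ K) = ∑ _y : α → V, (1:ℝ) := by simp [← hN, ← hK]
    rw [this]
    refine Finset.sum_le_sum fun y _ => ?_
    by_cases hb : B y
    · simp [hb, hno y hb]
    · simp [hb]; split_ifs <;> norm_num
  have h2 : cnt (fun y : α → V => Function.Injective y) = (N.descFactorial K : ℝ) := by
    rw [hN, hK, ← Fintype.card_embedding_eq (α := α) (β := V)]
    rw [cnt_eq, ← Fintype.card_subtype]
    norm_cast
    exact Fintype.card_congr (Equiv.subtypeInjectiveEquivEmbedding α V)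
  have hNpos : (0:ℝ) < N := by
    by_contra h
    have : (N:ℝ) = 0 := le_antisymm (not_lt.1 h) (by positivity)
    rw [this] at hV
    nlinarith [sq_nonneg (K:ℝ)]
  have h3 : ((N : ℝ) - K) ^ K ≤ (N.descFactorial K : ℝ) := by
    have := Nat.pow_sub_le_descFactorial N K
    have h : ((N + 1 - K : ℕ) : ℝ) ^ K ≤ (N.descFactorial K : ℝ) := by exact_mod_cast this
    refine le_trans (pow_le_pow_left₀ ?_ ?_ _) h
    · have : (K:ℝ) ≤ N := by exact_mod_cast hα
      linarith
    · rw [Nat.cast_sub (by omega)]; push_cast; linarith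
  have h4 : (1 - (K:ℝ) ^ 2 / N) * (N:ℝ) ^ K ≤ ((N : ℝ) - K) ^ K := by
    have hb := one_add_mul_le_pow (a := -((K:ℝ) / N)) (by
      have : (K:ℝ) / N ≤ 1 := by rw [div_le_one hNpos]; exact_mod_cast hα
      linarith) K
    have he : ((N : ℝ) - K) ^ K = (1 + -((K:ℝ) / N)) ^ K * (N:ℝ) ^ K := by
      rw [← mul_pow]; congr 1; field_simp; ring
    rw [he]
    refine mul_le_mul_of_nonneg_right (le_trans (le_of_eq ?_) hb) (by positivity)
    ring
  have h5 : (K:ℝ) ^ 2 / N < c := by rw [div_lt_iff₀ hNpos]; exact hV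
  have h6 : 0 < (N:ℝ) ^ K := by positivity
  nlinarith [mul_lt_mul_of_pos_right h5 h6]
lemma card_fix {V : Type*} [Fintype V] {m : ℕ} (i j k : Fin m) (hij : i ≠ j) (hik : i ≠ k)
    (hjk : j ≠ k) (a b c : V) :
    (Fintype.card V : ℝ) ^ 3 * cnt (fun x : Fin m → V => x i = a ∧ x j = b ∧ x k = c) =
      (Fintype.card V : ℝ) ^ m := by
  have h1 : cnt (fun x : Fin m → V => x i = a ∧ x j = b ∧ x k = c) =
      ((Fintype.piFinset (fun l : Fin m => if l = i then ({a} : Finset V) else if l = j then {b}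
        else if l = k then {c} else Finset.univ)).card : ℝ) := by
    rw [cnt_eq]
    congr 1
    congr 1
    ext x
    simp only [Finset.mem_filter, Finset.mem_univ, true_and, Fintype.mem_piFinset]
    constructor
    · rintro ⟨rfl, rfl, rfl⟩ l
      split_ifs with h1 h2 h3
      · simp [h1]
      · simp [h2]
      · simp [h3]
      · simp
    · intro h
      have hi := h i
      have hj := h j
      have hk := h k
      simp only [if_true, hij.symm, hik.symm, hjk.symm, if_false, Finset.mem_singleton] at hi hj hk
      exact ⟨hi, hj, hk⟩
  have h2 : (Fintype.card V : ℝ) ^ 3 = ∏ l : Fin m, (if l ∈ ({i, j, k} : Finset (Fin m)) then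
      (Fintype.card V : ℝ) else 1) := by
    rw [Finset.prod_ite_mem, Finset.univ_inter, Finset.prod_const]
    congr 1
    exact (Finset.card_eq_three.2 ⟨i, j, k, hij, hik, hjk, rfl⟩).symm
  rw [h1, Fintype.card_piFinset, h2]
  push_cast
  rw [← Finset.prod_mul_distrib]
  have h3 : (Fintype.card V : ℝ) ^ m = ∏ _l : Fin m, (Fintype.card V : ℝ) := by simp
  rw [h3]
  refine Finset.prod_congr rfl fun l _ => ?_
  by_cases hi : l = i
  · simp [hi]
  by_cases hj : l = j
  · simp [hi, hj, hij.symm]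
  by_cases hk : l = k
  · simp [hk, hik.symm, hjk.symm]
  simp [hi, hj, hk]

lemma wt_nonneg {V : Type*} (R : V → V → V → Prop) (a b c : V) : 0 ≤ wt R a b c := by
  unfold wt; split_ifs <;> norm_num

noncomputable def tot {V : Type*} [Fintype V] (R : V → V → V → Prop) : ℝ := ∑ a, ∑ b, ∑ c, wt R a b c

lemma tot_nonneg {V : Type*} [Fintype V] (R : V → V → V → Prop) : 0 ≤ tot R :=
  Finset.sum_nonneg fun a _ => Finset.sum_nonneg fun b _ => Finset.sum_nonneg fun c _ =>
    wt_nonneg R a b c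

lemma sum_fix {V : Type*} [Fintype V] (R : V → V → V → Prop)
    {m : ℕ} (i j k : Fin m) (hij : i ≠ j) (hik : i ≠ k)
    (hjk : j ≠ k) :
    (Fintype.card V : ℝ) ^ 3 * ∑ x : Fin m → V, wt R (x i) (x j) (x k) =
      (Fintype.card V : ℝ) ^ m * tot R := by
  have h1 : ∀ x : Fin m → V, wt R (x i) (x j) (x k) =
      ∑ a, ∑ b, ∑ c, wt R a b c * (if x i = a ∧ x j = b ∧ x k = c then 1 else 0) := by
    intro x
    rw [Finset.sum_eq_single (x i), Finset.sum_eq_single (x j), Finset.sum_eq_single (x k)]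
    · simp
    · intro d _ hd; simp [hd.symm]
    · simp
    · intro d _ hd; simp [hd.symm]
    · simp
    · intro d _ hd; simp [hd.symm]
    · simp
  simp only [h1]
  rw [Finset.sum_comm, tot, Finset.mul_sum, Finset.mul_sum]
  refine Finset.sum_congr rfl fun a _ => ?_
  rw [Finset.sum_comm, Finset.mul_sum, Finset.mul_sum]
  refine Finset.sum_congr rfl fun b _ => ?_
  rw [Finset.sum_comm, Finset.mul_sum, Finset.mul_sum]
  refine Finset.sum_congr rfl fun c _ => ?_
  rw [← card_fix i j k hij hik hjk a b c, ← Finset.mul_sum]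
  unfold cnt
  ring

lemma sample {V : Type*} [Fintype V] (R : V → V → V → Prop) (m : ℕ) :
    (Fintype.card V : ℝ) ^ m * tot R * ((m:ℝ) ^ 3 - 3 * (m:ℝ) ^ 2) ≤
    (Fintype.card V : ℝ) ^ 3 * ∑ x : Fin m → V, ∑ i, ∑ j, ∑ k, wt R (x i) (x j) (x k) := by
  set C := (Fintype.card V : ℝ) ^ m * tot R with hC
  have hC0 : 0 ≤ C := by have := tot_nonneg R; positivity
  have hl : C * ((m:ℝ) ^ 3 - 3 * (m:ℝ) ^ 2) = ∑ i : Fin m, ∑ j : Fin m, ∑ k : Fin m,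
      C * (1 - (if i = j then 1 else 0) - (if i = k then 1 else 0) - (if j = k then 1 else 0)) := by
    simp only [← Finset.mul_sum, Finset.sum_sub_distrib]
    simp
    left; ring
  have hr : (Fintype.card V : ℝ) ^ 3 * ∑ x : Fin m → V, ∑ i, ∑ j, ∑ k, wt R (x i) (x j) (x k) =
      ∑ i : Fin m, ∑ j : Fin m, ∑ k : Fin m,
        (Fintype.card V : ℝ) ^ 3 * ∑ x : Fin m → V, wt R (x i) (x j) (x k) := by
    rw [Finset.sum_comm, Finset.mul_sum]
    refine Finset.sum_congr rfl fun a _ => ?_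
    rw [Finset.sum_comm, Finset.mul_sum]
    refine Finset.sum_congr rfl fun b _ => ?_
    rw [Finset.sum_comm, Finset.mul_sum]
  rw [hl, hr]
  refine Finset.sum_le_sum fun i _ => Finset.sum_le_sum fun j _ => Finset.sum_le_sum fun k _ => ?_
  by_cases h : i ≠ j ∧ i ≠ k ∧ j ≠ k
  · rw [sum_fix R i j k h.1 h.2.1 h.2.2]
    simp [h]
    exact le_rfl
  · have h1 : 0 ≤ (Fintype.card V : ℝ) ^ 3 * ∑ x : Fin m → V, wt R (x i) (x j) (x k) :=
      mul_nonneg (by positivity) (Finset.sum_nonneg fun x _ => wt_nonneg _ _ _ _)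
    refine le_trans (mul_nonpos_of_nonneg_of_nonpos hC0 ?_) h1
    split_ifs <;> first | (exfalso; tauto) | norm_num

lemma lag_unif {m : ℕ} (hm : 0 < m) (R : Fin m → Fin m → Fin m → Prop)
    (h0 : ∀ a b c, R a b c → a ≠ b)
    (h1 : ∀ a b c, R a b c → R b a c) (h2 : ∀ a b c, R a b c → R a c b)
    (hF : ¬ ∃ φ, FHom R φ) : ∑ i, ∑ j, ∑ k, wt R i j k ≤ 2 / 9 * (m:ℝ) ^ 3 := by
  have hm' : (0:ℝ) < m := by exact_mod_cast hm
  have := lag h0 h1 h2 hF (fun _ => (m:ℝ)⁻¹) ⟨fun _ => by positivity, by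
    simp; field_simp⟩
  unfold P at this
  simp only [← Finset.sum_mul] at this
  have h3 : (0:ℝ) < m ^ 3 := by positivity
  calc ∑ i, ∑ j, ∑ k, wt R i j k = (∑ i, ∑ j, ∑ k, wt R i j k) * (m:ℝ)⁻¹ * (m:ℝ)⁻¹ * (m:ℝ)⁻¹ * m ^ 3 := by
        field_simp
    _ ≤ _ := mul_le_mul_of_nonneg_right this h3.le

/-- supersaturation for relations -/
lemma find_copy (ε : ℝ) (hε : 0 < ε) : ∃ N₀ : ℕ, ∀ n : ℕ, N₀ ≤ n →
    ∀ R : Fin n → Fin n → Fin n → Prop, (∀ a b c, R a b c → a ≠ b) →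
    (∀ a b c, R a b c → R b a c) → (∀ a b c, R a b c → R a c b) →
    (2 / 9 + ε) * (n:ℝ) ^ 3 ≤ tot R → ∃ ψ, Function.Injective ψ ∧ FHom R ψ := by
  obtain ⟨m, hm⟩ := exists_nat_gt (6 * (2 / 9 + ε) / ε)
  rw [div_lt_iff₀ hε] at hm
  have hm0 : 0 < m := by
    rcases Nat.eq_zero_or_pos m with h | h
    · subst h; simp at hm; linarith
    · exact h
  have hm' : (0:ℝ) < m := by exact_mod_cast hm0
  set Φ := Fintype.card (Fin 4 × Fin 7 → Fin m) with hΦ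
  have hΦ0 : (0:ℝ) < Φ := by
    haveI : Nonempty (Fin m) := ⟨⟨0, hm0⟩⟩
    rw [hΦ]; exact_mod_cast Fintype.card_pos
  set δ : ℝ := ε / 2 / Φ with hδ
  have hδ0 : 0 < δ := by positivity
  set c : ℝ := δ ^ (Fintype.card (Fin 4 × Fin 7) ^ m) with hc
  have hc0 : 0 < c := by positivity
  set K := Fintype.card (Fin m × (Fin 4 × Fin 7)) with hK
  obtain ⟨N₁, hN₁⟩ := exists_nat_gt ((K:ℝ) ^ 2 / c)
  refine ⟨max (max N₁ K) 1, fun n hn R h0 h1 h2 htot => ?_⟩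
  have hn1 : N₁ ≤ n := le_trans (le_max_left _ _) (le_trans (le_max_left _ _) hn)
  have hn2 : K ≤ n := le_trans (le_max_right _ _) (le_trans (le_max_left _ _) hn)
  have hn3 : 1 ≤ n := le_trans (le_max_right _ _) hn
  have hn' : (0:ℝ) < n := by exact_mod_cast hn3
  haveI : Nonempty (Fin n) := ⟨⟨0, hn3⟩⟩
  set Rx : (Fin m → Fin n) → Fin m → Fin m → Fin m → Prop :=
    fun x i j k => R (x i) (x j) (x k) with hRx
  set p := cnt (fun x : Fin m → Fin n => ∃ φ, FHom (Rx x) φ) with hp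
  have hs := sample R m
  rw [Fintype.card_fin] at hs
  have hub : ∑ x : Fin m → Fin n, ∑ i, ∑ j, ∑ k, wt R (x i) (x j) (x k) ≤
      (m:ℝ) ^ 3 * p + 2 / 9 * (m:ℝ) ^ 3 * (n:ℝ) ^ m := by
    have : (m:ℝ) ^ 3 * p + 2 / 9 * (m:ℝ) ^ 3 * (n:ℝ) ^ m = ∑ x : Fin m → Fin n,
        ((m:ℝ) ^ 3 * (if ∃ φ, FHom (Rx x) φ then 1 else 0) + 2 / 9 * (m:ℝ) ^ 3) := by
      rw [Finset.sum_add_distrib, ← Finset.mul_sum]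
      rw [Finset.sum_const, Finset.card_univ, Fintype.card_fun, Fintype.card_fin, Fintype.card_fin]
      rw [hp, cnt, nsmul_eq_mul]
      push_cast
      ring
    rw [this]
    refine Finset.sum_le_sum fun x _ => ?_
    by_cases hx : ∃ φ, FHom (Rx x) φ
    · rw [if_pos hx]
      have : ∑ i : Fin m, ∑ j : Fin m, ∑ k : Fin m, wt R (x i) (x j) (x k) ≤
          ∑ i : Fin m, ∑ j : Fin m, ∑ k : Fin m, (1:ℝ) := by
        refine Finset.sum_le_sum fun i _ => Finset.sum_le_sum fun j _ =>
          Finset.sum_le_sum fun k _ => ?_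
        unfold wt; split_ifs <;> norm_num
      simp at this
      have h3 : (0:ℝ) < m ^ 3 := by positivity
      nlinarith
    · rw [if_neg hx]
      have := lag_unif hm0 (Rx x) (fun a b c h hab => h0 _ _ _ h (by rw [hab]))
        (fun a b c h => h1 _ _ _ h) (fun a b c h => h2 _ _ _ h) hx
      simp only [wt, hRx] at this ⊢
      linarith
  have hpge : ε / 2 * (n:ℝ) ^ m ≤ p := by
    have hA : (0:ℝ) < (n:ℝ) ^ m := by positivity
    have hm6 : (6:ℝ) < m := by nlinarith
    have hB : (0:ℝ) ≤ (m:ℝ) ^ 3 - 3 * (m:ℝ) ^ 2 := by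
      have : (m:ℝ) ^ 3 - 3 * (m:ℝ) ^ 2 = (m:ℝ) ^ 2 * (m - 3) := by ring
      rw [this]; apply mul_nonneg <;> [positivity; linarith]
    have e1 : (n:ℝ) ^ m * ((2 / 9 + ε) * (n:ℝ) ^ 3) * ((m:ℝ) ^ 3 - 3 * (m:ℝ) ^ 2) ≤
        (n:ℝ) ^ 3 * ((m:ℝ) ^ 3 * p + 2 / 9 * (m:ℝ) ^ 3 * (n:ℝ) ^ m) := by
      refine le_trans ?_ (hs.trans (mul_le_mul_of_nonneg_left hub (by positivity)))
      gcongr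
    have e2 : (n:ℝ) ^ m * (2 / 9 + ε) * ((m:ℝ) ^ 3 - 3 * (m:ℝ) ^ 2) ≤
        ((m:ℝ) ^ 3 * p + 2 / 9 * (m:ℝ) ^ 3 * (n:ℝ) ^ m) := by
      have : (0:ℝ) < (n:ℝ) ^ 3 := by positivity
      refine le_of_mul_le_mul_left (le_trans (le_of_eq ?_) e1) this
      ring
    have e3 : (m:ℝ) ^ 2 * ((n:ℝ) ^ m * (2 / 9 + ε) * ((m:ℝ) - 3)) ≤
        (m:ℝ) ^ 2 * (m * p + 2 / 9 * m * (n:ℝ) ^ m) := by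
      refine le_trans (le_of_eq ?_) (e2.trans (le_of_eq ?_)) <;> ring
    have e4 := le_of_mul_le_mul_left e3 (by positivity)
    have e5 : (n:ℝ) ^ m * (ε / 2 * m) ≤ m * p := by
      have : (n:ℝ) ^ m * (3 * (2 / 9 + ε)) ≤ (n:ℝ) ^ m * (m * ε / 2) :=
        mul_le_mul_of_nonneg_left (by linarith) hA.le
      nlinarith
    refine le_of_mul_le_mul_left (le_trans (le_of_eq ?_) e5) hm'
    ring
  have hpig : ∃ φ : (Fin 4 × Fin 7) → Fin m, δ * (n:ℝ) ^ m ≤ cnt (fun x : Fin m → Fin n => FHom (Rx x) φ) := by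
    by_contra hno
    push Not at hno
    have h3 : p ≤ ∑ φ : (Fin 4 × Fin 7) → Fin m, cnt (fun x : Fin m → Fin n => FHom (Rx x) φ) := by
      rw [hp]; unfold cnt
      rw [Finset.sum_comm]
      refine Finset.sum_le_sum fun x _ => ?_
      by_cases hx : ∃ φ, FHom (Rx x) φ
      · rw [if_pos hx]
        obtain ⟨φ, hφ⟩ := hx
        have := Finset.single_le_sum (f := fun φ : (Fin 4 × Fin 7) → Fin m => if FHom (Rx x) φ then (1:ℝ) else 0)
          (fun φ _ => by split_ifs <;> norm_num) (Finset.mem_univ φ)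
        simp only [hφ, if_true] at this
        exact this
      · rw [if_neg hx]
        exact Finset.sum_nonneg fun φ _ => by split_ifs <;> norm_num
    have h4 : ∑ φ : (Fin 4 × Fin 7) → Fin m, cnt (fun x : Fin m → Fin n => FHom (Rx x) φ) <
        ∑ φ : (Fin 4 × Fin 7) → Fin m, δ * (n:ℝ) ^ m := by
      haveI : Nonempty (Fin m) := ⟨⟨0, hm0⟩⟩
      exact Finset.sum_lt_sum_of_nonempty Finset.univ_nonempty fun φ _ => hno φ
    rw [Finset.sum_const, Finset.card_univ, ← hΦ, nsmul_eq_mul, hδ] at h4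
    have h5 : (Φ:ℝ) * (ε / 2 / Φ * (n:ℝ) ^ m) = ε / 2 * (n:ℝ) ^ m := by field_simp
    linarith
  obtain ⟨φ, hφ⟩ := hpig
  have hbl := blowup (T := Fin 4 × Fin 7) m (fun x : Fin m → Fin n => FHom (Rx x) φ) δ hδ0.le
    (by rw [Fintype.card_fin]; exact hφ)
  rw [Fintype.card_fin] at hbl
  obtain ⟨y, hy, hyinj⟩ := inj_count (α := Fin m × (Fin 4 × Fin 7)) (V := Fin n) c hc0
    (by rw [Fintype.card_fin, ← hK]
        rw [div_lt_iff₀ hc0] at hN₁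
        have : (N₁:ℝ) ≤ n := by exact_mod_cast hn1
        nlinarith)
    (by rw [Fintype.card_fin]; exact hn2)
    (fun y => ∀ s : Fin m → (Fin 4 × Fin 7), FHom (Rx (fun i => y (i, s i))) φ)
    (by
      have e : cnt (fun y : Fin m × (Fin 4 × Fin 7) → Fin n => ∀ s : Fin m → (Fin 4 × Fin 7), FHom (Rx (fun i => y (i, s i))) φ) =
          cnt (fun y : Fin m → (Fin 4 × Fin 7) → Fin n => ∀ s : Fin m → (Fin 4 × Fin 7), FHom (Rx (fun i => y i (s i))) φ) := by
        unfold cnt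
        rw [← (Equiv.curry (Fin m) (Fin 4 × Fin 7) (Fin n)).sum_comp]
        rfl
      rw [e]
      refine le_trans (le_of_eq ?_) hbl
      rw [← hc, Fintype.card_fin, Fintype.card_prod, Fintype.card_fin, ← pow_mul, mul_comm m])
  refine ⟨fun u => y (φ u, u), fun u v huv => (Prod.ext_iff.1 (hyinj huv)).2, ?_⟩
  intro u v w huvw
  have hd : φ u ≠ φ v ∧ φ u ≠ φ w ∧ φ v ≠ φ w := by
    have hR := hy (fun _ => u) u v w huvw
    simp only [hRx] at hR
    refine ⟨fun h => h0 _ _ _ hR (by rw [h]), fun h => h0 _ _ _ (h2 _ _ _ hR) (by rw [h]),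
      fun h => h0 _ _ _ (h2 _ _ _ (h1 _ _ _ hR)) (by rw [h])⟩
  have hR := hy (fun i => if i = φ u then u else if i = φ v then v else w) u v w huvw
  simpa [hRx, hd.1.symm, hd.2.1.symm, hd.2.2.symm] using hR
def RH {V : Type*} [DecidableEq V] (H : Set (Finset V)) (a b c : V) : Prop := ({a, b, c} : Finset V) ∈ H

lemma RH_swap {V : Type*} [DecidableEq V] (H : Set (Finset V)) (a b c : V) (h : RH H a b c) : RH H b a c := by
  unfold RH at *; rwa [Finset.insert_comm]

lemma RH_swap' {V : Type*} [DecidableEq V] (H : Set (Finset V)) (a b c : V) (h : RH H a b c) : RH H a c b := by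
  unfold RH at *; rwa [Finset.pair_comm]

lemma RH_ne {V : Type*} [DecidableEq V] {H : Set (Finset V)} (hH : IsThreeGraph H) (a b c : V) (h : RH H a b c) :
    a ≠ b := by
  rintro rfl
  have := hH _ h
  rw [Finset.insert_eq_of_mem (by simp)] at this
  have h2 := Finset.card_le_two (a := a) (b := c)
  omega

lemma perm_key {V : Type*} [DecidableEq V] (t : V × V × V) (p q r : V)
    (ht : t = (p, q, r) ∨ t = (p, r, q) ∨ t = (q, p, r) ∨ t = (q, r, p) ∨ t = (r, p, q) ∨
      t = (r, q, p)) : ({t.1, t.2.1, t.2.2} : Finset V) = {p, q, r} := by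
  rcases ht with rfl | rfl | rfl | rfl | rfl | rfl <;> ext x <;>
    simp only [Finset.mem_insert, Finset.mem_singleton] <;> tauto

lemma tot_ge {n : ℕ} {H : Set (Finset (Fin n))} (hH : IsThreeGraph H) :
    6 * (H.ncard : ℝ) ≤ tot (RH H) := by
  have h1 : tot (RH H) = ((Finset.univ.filter fun t : Fin n × Fin n × Fin n =>
      RH H t.1 t.2.1 t.2.2).card : ℝ) := by
    rw [← cnt_eq]
    unfold tot cnt
    rw [Fintype.sum_prod_type]
    refine Finset.sum_congr rfl fun a _ => ?_
    rw [Fintype.sum_prod_type]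
    rfl
  rw [h1, Set.ncard_eq_toFinset_card' H]
  rw [Finset.card_eq_sum_card_fiberwise (t := H.toFinset)
    (f := fun t : Fin n × Fin n × Fin n => ({t.1, t.2.1, t.2.2} : Finset (Fin n)))]
  · have : ∀ e ∈ H.toFinset, 6 ≤ ((Finset.univ.filter fun t : Fin n × Fin n × Fin n =>
      RH H t.1 t.2.1 t.2.2).filter fun t => ({t.1, t.2.1, t.2.2} : Finset (Fin n)) = e).card := by
      intro e he
      rw [Set.mem_toFinset] at he
      obtain ⟨p, q, r, hpq, hpr, hqr, rfl⟩ := Finset.card_eq_three.1 (hH e he)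
      have h6 : ({(p, q, r), (p, r, q), (q, p, r), (q, r, p), (r, p, q), (r, q, p)} :
          Finset (Fin n × Fin n × Fin n)).card = 6 := by
        simp [hpq, hpr, hqr, hpq.symm, hpr.symm, hqr.symm, Finset.card_insert_of_notMem]
      rw [← h6]
      apply Finset.card_le_card
      intro t ht
      have key : ({t.1, t.2.1, t.2.2} : Finset (Fin n)) = {p, q, r} := by
        simp only [Finset.mem_insert, Finset.mem_singleton] at ht
        exact perm_key t p q r ht
      refine Finset.mem_filter.2 ⟨Finset.mem_filter.2 ⟨Finset.mem_univ _, ?_⟩, key⟩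
      unfold RH
      rw [key]
      exact he
    have := Finset.card_nsmul_le_sum _ _ _ this
    rw [smul_eq_mul] at this
    have h' : ((H.toFinset.card * 6 : ℕ) : ℝ) ≤ _ := Nat.cast_le.2 this
    push_cast at h' ⊢
    linarith
  · intro t ht
    have h2 := (Finset.mem_filter.1 (Finset.mem_coe.1 ht)).2
    unfold RH at h2
    exact Finset.mem_coe.2 (Set.mem_toFinset.2 h2)

lemma choose3 (n : ℕ) (hn : 2 ≤ n) :
    (n.choose 3 : ℝ) = (n:ℝ) * ((n:ℝ) - 1) * ((n:ℝ) - 2) / 6 := by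
  obtain ⟨k, rfl⟩ := Nat.exists_eq_add_of_le hn
  have h := Nat.descFactorial_eq_factorial_mul_choose (2 + k) 3
  have h2 : (2 + k).descFactorial 3 = k * ((1 + k) * (2 + k)) := by
    simp [Nat.descFactorial_succ]
  rw [h2] at h
  have h3 : ((k * ((1 + k) * (2 + k)) : ℕ) : ℝ) = ((Nat.factorial 3 * (2 + k).choose 3 : ℕ) : ℝ) := by
    rw [h]
  simp [Nat.factorial] at h3
  push_cast
  linarith

lemma upper (ε : ℝ) (hε : 0 < ε) : ∃ N : ℕ, ∀ n : ℕ, N ≤ n → ∀ H : Set (Finset (Fin n)),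
    IsThreeGraph H → ¬ ContainsCopy F H → (H.ncard : ℝ) ≤ (2 / 9 + ε) * (n.choose 3 : ℝ) := by
  obtain ⟨N₀, hN₀⟩ := find_copy (ε / 2) (by linarith)
  obtain ⟨N₁, hN₁⟩ := exists_nat_gt (6 * (2 / 9 + ε) / ε)
  rw [div_lt_iff₀ hε] at hN₁
  refine ⟨max (max N₀ N₁) 2, fun n hn H hH hno => ?_⟩
  have hn1 : N₀ ≤ n := le_trans (le_max_left _ _) (le_trans (le_max_left _ _) hn)
  have hn2 : N₁ ≤ n := le_trans (le_max_right _ _) (le_trans (le_max_left _ _) hn)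
  have hn3 : 2 ≤ n := le_trans (le_max_right _ _) hn
  by_contra hlt
  push Not at hlt
  apply hno
  obtain ⟨ψ, hψ, hhom⟩ := hN₀ n hn1 (RH H) (RH_ne hH) (RH_swap H) (RH_swap' H) (by
    refine le_trans ?_ (tot_ge hH)
    rw [choose3 n hn3] at hlt
    have hn' : (N₁:ℝ) ≤ n := by exact_mod_cast hn2
    have hn0 : (0:ℝ) < n := by have : 0 < n := by omega
                               exact_mod_cast this
    have hx : 6 * (2 / 9 + ε) ≤ n * ε := by nlinarith
    have h1 : (2 / 9 + ε / 2) * (n:ℝ) ^ 3 ≤ (2 / 9 + ε) * ((n:ℝ) * ((n:ℝ) - 1) * ((n:ℝ) - 2)) := by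
      have : (n:ℝ) ^ 2 * (6 * (2 / 9 + ε)) ≤ (n:ℝ) ^ 2 * (n * ε) :=
        mul_le_mul_of_nonneg_left hx (by positivity)
      nlinarith
    linarith)
  refine ⟨ψ, hψ, fun e he => ?_⟩
  obtain ⟨u, v, w, rfl, hR⟩ := exists_of_mem_F he
  have := hhom u v w hR
  unfold RH at this
  convert this using 1
  ext x; simp

def col {n : ℕ} (i : Fin n) : Fin 3 := ⟨i.1 % 3, Nat.mod_lt _ (by norm_num)⟩

def HT (n : ℕ) : Set (Finset (Fin n)) := {e | ∃ a b c : Fin n, e = {a, b, c} ∧ RB (col a) (col b) (col c)}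

lemma HT_three (n : ℕ) : IsThreeGraph (HT n) := by
  rintro e ⟨a, b, c, rfl, h1, h2, h3⟩
  exact Finset.card_eq_three.2 ⟨a, b, c, fun h => h1 (by rw [h]), fun h => h2 (by rw [h]),
    fun h => h3 (by rw [h]), rfl⟩

lemma HT_free (n : ℕ) : ¬ ContainsCopy F (HT n) := by
  rintro ⟨φ, -, h⟩
  apply not_RB (fun u => col (φ u))
  intro u v w hR
  obtain ⟨a, b, c, he, hc⟩ := h _ (mem_F_of_FR hR)
  have he' : ({φ u, φ v, φ w} : Finset (Fin n)) = {a, b, c} := by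
    rw [← he]; ext x; simp
  exact sym_of_eq (R := RB) (fun a b c h => ⟨h.1.symm, h.2.2, h.2.1⟩)
    (fun a b c h => ⟨h.2.1, h.1, h.2.2.symm⟩) (col (n := n))
    (fun h => hc.1 (by rw [h])) (fun h => hc.2.1 (by rw [h])) (fun h => hc.2.2 (by rw [h])) he' hc

lemma HT_card (n : ℕ) : (n / 3) ^ 3 ≤ (HT n).ncard := by
  set q := n / 3 with hq
  have h3 : 3 * q ≤ n := Nat.mul_div_le n 3
  let f : Fin q × Fin q × Fin q → Finset (Fin n) := fun t =>
    {⟨3 * t.1.1, by omega⟩, ⟨3 * t.2.1.1 + 1, by omega⟩, ⟨3 * t.2.2.1 + 2, by omega⟩}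
  have hf : Function.Injective f := by
    rintro ⟨a, b, c⟩ ⟨a', b', c'⟩ h
    have ha : (⟨3 * a.1, by omega⟩ : Fin n) ∈ f (a', b', c') := by rw [← h]; simp [f]
    have hb : (⟨3 * b.1 + 1, by omega⟩ : Fin n) ∈ f (a', b', c') := by rw [← h]; simp [f]
    have hc : (⟨3 * c.1 + 2, by omega⟩ : Fin n) ∈ f (a', b', c') := by rw [← h]; simp [f]
    simp only [f, Finset.mem_insert, Finset.mem_singleton, Fin.mk.injEq] at ha hb hc
    simp only [Prod.mk.injEq, Fin.ext_iff]
    omega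
  have hr : Set.range f ⊆ HT n := by
    rintro _ ⟨t, rfl⟩
    refine ⟨_, _, _, rfl, ?_⟩
    simp only [RB, col, ne_eq, Fin.mk.injEq]
    omega
  calc q ^ 3 = Nat.card (Fin q × Fin q × Fin q) := by simp; ring
    _ = (Set.range f).ncard := by
      rw [← Set.image_univ, Set.ncard_image_of_injective _ hf, Set.ncard_univ]
    _ ≤ _ := Set.ncard_le_ncard hr (Set.toFinite _)

/-- The Turán density of `F = K4⁻ × F*` equals `2/9`. -/
theorem turan_density_F :
    ∀ ε : ℝ, 0 < ε → ∃ N : ℕ, ∀ n : ℕ, N ≤ n →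
      (2 / 9 - ε) * (n.choose 3 : ℝ) ≤ (exF n : ℝ) ∧
        (exF n : ℝ) ≤ (2 / 9 + ε) * (n.choose 3 : ℝ) := by
  intro ε hε
  obtain ⟨N₀, hN₀⟩ := upper ε hε
  obtain ⟨N₁, hN₁⟩ := exists_nat_gt (2 / ε)
  rw [div_lt_iff₀ hε] at hN₁
  refine ⟨max (max N₀ N₁) 2, fun n hn => ?_⟩
  have hn1 : N₀ ≤ n := le_trans (le_max_left _ _) (le_trans (le_max_left _ _) hn)
  have hn2 : N₁ ≤ n := le_trans (le_max_right _ _) (le_trans (le_max_left _ _) hn)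
  have hn3 : 2 ≤ n := le_trans (le_max_right _ _) hn
  set S := {k | ∃ H : Set (Finset (Fin n)), IsThreeGraph H ∧ ¬ ContainsCopy F H ∧ H.ncard = k} with hS
  have hmem : (HT n).ncard ∈ S := ⟨_, HT_three n, HT_free n, rfl⟩
  have hbdd : BddAbove S := by
    refine ⟨(Set.univ : Set (Finset (Fin n))).ncard, ?_⟩
    rintro k ⟨H, -, -, rfl⟩
    exact Set.ncard_le_ncard (Set.subset_univ _) (Set.toFinite _)
  constructor
  · have h1 : (HT n).ncard ≤ exF n := le_csSup hbdd hmem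
    have h2 : ((n / 3 : ℕ) : ℝ) ^ 3 ≤ (exF n : ℝ) := by exact_mod_cast (HT_card n).trans h1
    refine le_trans ?_ h2
    have hq : ((n:ℝ) - 2) / 3 ≤ ((n / 3 : ℕ) : ℝ) := by
      have : n ≤ 3 * (n / 3) + 2 := by omega
      have : (n:ℝ) ≤ 3 * ((n / 3 : ℕ) : ℝ) + 2 := by exact_mod_cast this
      linarith
    have hn2' : (2:ℝ) ≤ n := by exact_mod_cast hn3
    have hn' : (N₁:ℝ) ≤ n := by exact_mod_cast hn2
    refine le_trans ?_ (pow_le_pow_left₀ (by linarith) hq 3)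
    rw [choose3 n hn3]
    have hx : 2 ≤ n * ε := by nlinarith
    -- reduce to an elementary inequality
    have h3 : (2 / 9 - ε) * ((n:ℝ) * ((n:ℝ) - 1)) * 9 ≤ 2 * ((n:ℝ) - 2) ^ 2 := by
      nlinarith [mul_le_mul_of_nonneg_right hx (by linarith : (0:ℝ) ≤ (n:ℝ) - 1)]
    nlinarith [mul_le_mul_of_nonneg_right h3 (by linarith : (0:ℝ) ≤ (n:ℝ) - 2)]
  · have hm : exF n ∈ S := Nat.sSup_mem ⟨_, hmem⟩ hbdd
    obtain ⟨H, hH, hno, hk⟩ := hm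
    rw [← hk]
    exact hN₀ n hn1 H hH hno
end

section
/- The Turán density of the two-element family {K4⁻, F*} equals 2/9; that is, ex(n,{K4⁻, F*})/C(n,3) → 2/9 as n → ∞. Equivalently: for every ε > 0 there is N such that for all n ≥ N, (2/9 − ε)·C(n,3) ≤ ex(n,{K4⁻, F*}) ≤ (2/9 + ε)·C(n,3). -/
open scoped Classical

/-- `ex(n, {K4⁻, F*})`: the maximum number of edges of an `n`-vertex 3-graph containing
no subgraph isomorphic to `K4⁻` or to `F*`. -/
noncomputable def exKF (n : ℕ) : ℕ :=
  sSup {k | ∃ H : Set (Finset (Fin n)), IsThreeGraph H ∧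
    ¬ ContainsCopy K4minus H ∧ ¬ ContainsCopy Fstar H ∧ H.ncard = k}

section Lag

variable {V : Type} [Fintype V]

noncomputable def triM (τ : V → V → V → ℝ) (x y z : V → ℝ) : ℝ :=
  ∑ a, ∑ b, ∑ c, τ a b c * x a * y b * z c

lemma triM_add1 (τ : V → V → V → ℝ) (x x' y z : V → ℝ) :
    triM τ (x + x') y z = triM τ x y z + triM τ x' y z := by
  simp only [triM, ← Finset.sum_add_distrib]
  refine Finset.sum_congr rfl fun a _ => Finset.sum_congr rfl fun b _ =>
    Finset.sum_congr rfl fun c _ => ?_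
  simp only [Pi.add_apply]; ring

lemma triM_smul1 (τ : V → V → V → ℝ) (t : ℝ) (x y z : V → ℝ) :
    triM τ (t • x) y z = t * triM τ x y z := by
  simp only [triM, Finset.mul_sum]
  refine Finset.sum_congr rfl fun a _ => Finset.sum_congr rfl fun b _ =>
    Finset.sum_congr rfl fun c _ => ?_
  simp only [Pi.smul_apply, smul_eq_mul]; ring

lemma triM_swap12 (τ : V → V → V → ℝ) (h : ∀ a b c, τ a b c = τ b a c) (x y z : V → ℝ) :
    triM τ x y z = triM τ y x z := by
  simp only [triM]
  rw [Finset.sum_comm]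
  refine Finset.sum_congr rfl fun a _ => Finset.sum_congr rfl fun b _ =>
    Finset.sum_congr rfl fun c _ => ?_
  rw [h]; ring

lemma triM_swap23 (τ : V → V → V → ℝ) (h : ∀ a b c, τ a b c = τ a c b) (x y z : V → ℝ) :
    triM τ x y z = triM τ x z y := by
  simp only [triM]
  refine Finset.sum_congr rfl fun a _ => ?_
  rw [Finset.sum_comm]
  refine Finset.sum_congr rfl fun b _ =>
    Finset.sum_congr rfl fun c _ => ?_
  rw [h]; ring

lemma triM_expand (τ : V → V → V → ℝ) (h12 : ∀ a b c, τ a b c = τ b a c)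
    (h23 : ∀ a b c, τ a b c = τ a c b) (x d : V → ℝ) (t : ℝ) :
    triM τ (x + t • d) (x + t • d) (x + t • d) =
      triM τ x x x + 3 * t * triM τ d x x + 3 * t ^ 2 * triM τ d d x + t ^ 3 * triM τ d d d := by
  have add2 : ∀ x y y' z, triM τ x (y + t • y') z = triM τ x y z + t * triM τ x y' z := by
    intro x y y' z
    rw [triM_swap12 τ h12, triM_add1, triM_smul1, triM_swap12 τ h12 y, triM_swap12 τ h12 y']
  have add3 : ∀ x y z z', triM τ x y (z + t • z') = triM τ x y z + t * triM τ x y z' := by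
    intro x y z z'
    rw [triM_swap23 τ h23, add2, triM_swap23 τ h23 x z, triM_swap23 τ h23 x z']
  rw [triM_add1, triM_smul1]
  simp only [add2, add3]
  have e1 : triM τ x d x = triM τ d x x := triM_swap12 τ h12 _ _ _
  have e2 : triM τ x x d = triM τ d x x := by rw [triM_swap23 τ h23, e1]
  have e3 : triM τ d x d = triM τ d d x := triM_swap23 τ h23 _ _ _
  have e4 : triM τ x d d = triM τ d d x := by rw [triM_swap12 τ h12, e3]
  rw [e1, e2, e3, e4]; ring

lemma triM_single1 (τ : V → V → V → ℝ) (u v : V) (y z : V → ℝ) :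
    triM τ (Pi.single v 1 - Pi.single u 1) y z =
      (∑ b, ∑ c, τ v b c * y b * z c) - ∑ b, ∑ c, τ u b c * y b * z c := by
  have hs : ∀ w : V, triM τ (Pi.single w 1) y z = ∑ b, ∑ c, τ w b c * y b * z c := by
    intro w
    simp only [triM]
    rw [Finset.sum_eq_single w]
    · simp
    · intro b _ hb
      simp [Pi.single_eq_of_ne hb]
    · simp
  have := triM_add1 τ (Pi.single v 1 - Pi.single u 1) (Pi.single u 1) y z
  rw [sub_add_cancel, hs, hs] at this
  linarith

lemma triM_shift (τ : V → V → V → ℝ) (h12 : ∀ a b c, τ a b c = τ b a c)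
    (h23 : ∀ a b c, τ a b c = τ a c b) (h0 : ∀ a c, τ a a c = 0) (x : V → ℝ) (u v : V) (t : ℝ) :
    triM τ (x + t • (Pi.single v 1 - Pi.single u 1)) (x + t • (Pi.single v 1 - Pi.single u 1))
        (x + t • (Pi.single v 1 - Pi.single u 1)) =
      triM τ x x x + 3 * t * ((∑ b, ∑ c, τ v b c * x b * x c) - ∑ b, ∑ c, τ u b c * x b * x c)
        - 6 * t ^ 2 * ∑ c, τ u v c * x c := by
  have key : ∀ w (z : V → ℝ), ∑ b, ∑ c, τ w b c *
      (Pi.single v 1 - Pi.single u 1 : V → ℝ) b * z c =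
      (∑ c, τ w v c * z c) - ∑ c, τ w u c * z c := by
    intro w z
    have : ∀ b, ∑ c, τ w b c * (Pi.single v 1 - Pi.single u 1 : V → ℝ) b * z c
      = (Pi.single v 1 : V → ℝ) b * (∑ c, τ w b c * z c)
        - (Pi.single u 1 : V → ℝ) b * (∑ c, τ w b c * z c) := by
      intro b
      rw [Finset.mul_sum, Finset.mul_sum, ← Finset.sum_sub_distrib]
      refine Finset.sum_congr rfl fun c _ => ?_
      simp only [Pi.sub_apply]; ring
    simp only [this, Finset.sum_sub_distrib]
    congr 1
    · rw [Finset.sum_eq_single v] <;> simp +contextual [Pi.single_apply]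
    · rw [Finset.sum_eq_single u] <;> simp +contextual [Pi.single_apply]
  rw [triM_expand τ h12 h23, triM_single1, triM_single1, triM_single1, key, key, key, key]
  have e : ∀ z : V → ℝ, ∑ c, τ v u c * z c = ∑ c, τ u v c * z c := fun z =>
    Finset.sum_congr rfl fun c _ => by rw [h12]
  have e0 : ∀ z : V → ℝ, ∀ w, ∑ c, τ w w c * z c = 0 := fun z w =>
    Finset.sum_eq_zero fun c _ => by rw [h0]; ring
  have e00 : ∀ a c, τ a c c = 0 := fun a c => by rw [h12, h23, h0]
  have e3 : ∑ c, τ u v c * (Pi.single v 1 - Pi.single u 1 : V → ℝ) c = 0 := by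
    refine Finset.sum_eq_zero fun c _ => ?_
    by_cases h1 : c = v
    · subst h1; rw [e00]; ring
    by_cases h2 : c = u
    · subst h2; rw [h23, h0]; ring
    simp [Pi.single_apply, h1, h2]
  simp only [e, e0, e3]
  ring

lemma continuous_triM (τ : V → V → V → ℝ) : Continuous fun x : V → ℝ => triM τ x x x := by
  unfold triM
  fun_prop

lemma lag_bound (T : V → V → V → Prop) (h12 : ∀ a b c, T a b c → T b a c)
    (h23 : ∀ a b c, T a b c → T a c b) (hne : ∀ a b c, T a b c → a ≠ b)
    (hK : ∀ a b c d, T a b c → T a b d → T a c d → False)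
    (hF : ∀ a b c d e, T a b c → T a b d → T c d e → (∃ f, T a e f) → (∃ g, T b e g) → False)
    (x₀ : V → ℝ) (hx₀ : x₀ ∈ stdSimplex ℝ V) :
    triM (fun a b c => if T a b c then (1:ℝ) else 0) x₀ x₀ x₀ ≤ 2 / 9 := by
  set τ : V → V → V → ℝ := fun a b c => if T a b c then (1:ℝ) else 0 with hτ
  have t12 : ∀ a b c, τ a b c = τ b a c := fun a b c => by
    simp only [hτ]; exact if_congr ⟨h12 _ _ _, h12 _ _ _⟩ rfl rfl
  have t23 : ∀ a b c, τ a b c = τ a c b := fun a b c => by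
    simp only [hτ]; exact if_congr ⟨h23 _ _ _, h23 _ _ _⟩ rfl rfl
  have t0 : ∀ a c, τ a a c = 0 := fun a c => by
    simp only [hτ]; exact if_neg fun h => hne _ _ _ h rfl
  have tnn : ∀ a b c, 0 ≤ τ a b c := fun a b c => by
    simp only [hτ]; split_ifs <;> norm_num
  obtain ⟨y, hy, hymax⟩ := (isCompact_stdSimplex ℝ V).exists_isMaxOn ⟨x₀, hx₀⟩
    (continuous_triM τ).continuousOn
  -- minimal support among maximizers
  let Q : ℕ → Prop := fun k => ∃ x ∈ stdSimplex ℝ V, triM τ x x x = triM τ y y y ∧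
    (Finset.univ.filter fun v => x v ≠ 0).card = k
  have hQ : ∃ k, Q k := ⟨_, y, hy, rfl, rfl⟩
  obtain ⟨x, hx, hxy, hxk⟩ := Nat.find_spec hQ
  have hmin : ∀ z ∈ stdSimplex ℝ V, triM τ z z z = triM τ y y y →
      (Finset.univ.filter fun v => x v ≠ 0).card ≤ (Finset.univ.filter fun v => z v ≠ 0).card := by
    intro z hz hzy
    rw [hxk]
    exact Nat.find_min' hQ ⟨z, hz, hzy, rfl⟩
  have hmax : ∀ z ∈ stdSimplex ℝ V, triM τ z z z ≤ triM τ x x x := by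
    intro z hz; rw [hxy]; exact hymax hz
  refine (hmax x₀ hx₀).trans ?_
  set S := Finset.univ.filter fun v => x v ≠ 0 with hS
  have memS : ∀ v, v ∈ S ↔ x v ≠ 0 := fun v => by simp [hS]
  have hxn : ∀ v, 0 ≤ x v := hx.1
  have hx1 : ∑ v, x v = 1 := hx.2
  have hpos : ∀ v ∈ S, 0 < x v := fun v hv => lt_of_le_of_ne (hxn v) ((memS v).1 hv).symm
  set w : V → ℝ := fun v => ∑ b, ∑ c, τ v b c * x b * x c with hw
  -- shifts stay in the simplex
  have hshift : ∀ u v, u ≠ v → ∀ t, 0 ≤ t → t ≤ x u →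
      x + t • (Pi.single v 1 - Pi.single u 1 : V → ℝ) ∈ stdSimplex ℝ V := by
    intro u v huv t ht0 htu
    refine ⟨fun a => ?_, ?_⟩
    · simp only [Pi.add_apply, Pi.smul_apply, Pi.sub_apply, smul_eq_mul, Pi.single_apply]
      have := hxn a
      by_cases h1 : a = u
      · subst h1
        rw [if_neg huv]; simp; linarith
      · rw [if_neg h1]
        split_ifs <;> simp <;> linarith
    · simp only [Pi.add_apply, Pi.smul_apply, Pi.sub_apply, smul_eq_mul, Finset.sum_add_distrib,
        ← Finset.mul_sum, Finset.sum_sub_distrib, hx1]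
      simp
  have hBnn : ∀ u v, 0 ≤ ∑ c, τ u v c * x c := fun u v =>
    Finset.sum_nonneg fun c _ => mul_nonneg (tnn _ _ _) (hxn c)
  have hle : ∀ u ∈ S, ∀ v ∈ S, w v ≤ w u := by
    intro u hu v hv
    by_cases huv : u = v
    · subst huv; exact le_rfl
    by_contra hcon
    push Not at hcon
    set B := ∑ c, τ u v c * x c with hB
    have hB0 : 0 ≤ B := hBnn u v
    set A := w v - w u with hA
    have hA0 : 0 < A := by simp only [hA]; linarith
    set t := min (x u) (A / (4 * B + 1)) with ht
    have ht0 : 0 < t := lt_min (hpos u hu) (by positivity)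
    have := hmax _ (hshift u v huv t ht0.le (min_le_left _ _))
    rw [triM_shift τ t12 t23 t0] at this
    have h2 : 3 * t * A - 6 * t ^ 2 * B ≤ 0 := by
      simp only [hA, hw, hB]; linarith
    have h3 : t * (4 * B + 1) ≤ A := by
      rw [← le_div_iff₀ (by positivity)]; exact min_le_right _ _
    have h4 : t * (A - 2 * t * B) ≤ 0 := by nlinarith
    have h5 : 0 < A - 2 * t * B := by nlinarith [mul_nonneg ht0.le hB0]
    nlinarith [mul_pos ht0 h5]
  have heq : ∀ u ∈ S, ∀ v ∈ S, w v = w u := fun u hu v hv =>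
    le_antisymm (hle u hu v hv) (hle v hv u hu)
  have hcov : ∀ u ∈ S, ∀ v ∈ S, u ≠ v → ∃ c ∈ S, T u v c := by
    intro u hu v hv huv
    by_contra hcon
    push Not at hcon
    have hB : ∑ c, τ u v c * x c = 0 := by
      refine Finset.sum_eq_zero fun c _ => ?_
      by_cases hc : c ∈ S
      · simp [hτ, hcon c hc]
      · rw [memS] at hc; push Not at hc; rw [hc, mul_zero]
    have hz := hshift u v huv (x u) (hxn u) le_rfl
    have hval := triM_shift τ t12 t23 t0 x u v (x u)
    rw [hB] at hval
    have hweq : w v = w u := heq u hu v hv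
    simp only [hw] at hweq
    rw [hweq, sub_self, mul_zero, mul_zero, add_zero, sub_zero, hxy] at hval
    have hcard := hmin _ hz hval
    refine absurd hcard (not_le.2 (Finset.card_lt_card ?_))
    rw [Finset.ssubset_iff_of_subset]
    · refine ⟨u, hu, ?_⟩
      simp [Pi.single_apply, huv]
    · intro a ha
      rw [memS]
      by_cases h1 : a = u
      · subst h1; exact (memS _).1 hu
      by_cases h2 : a = v
      · subst h2; exact (memS _).1 hv
      simpa [Pi.single_apply, h1, h2] using ha
  -- codegrees at most one
  have huniq : ∀ b ∈ S, ∀ c ∈ S, ∀ v ∈ S, ∀ v' ∈ S, T v b c → T v' b c → v = v' := by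
    intro b hb c hc v hv v' hv' h h'
    by_contra hvv
    obtain ⟨e, he, hT⟩ := hcov v hv v' hv' hvv
    have g : T b c v := h23 _ _ _ (h12 _ _ _ h) |> fun q => q
    have g' : T b c v' := h23 _ _ _ (h12 _ _ _ h')
    by_cases hbe : b = e
    · subst hbe
      exact hK b c v v' g g' (h12 _ _ _ (h23 _ _ _ hT))
    by_cases hce : c = e
    · subst hce
      exact hK c b v v' (h12 _ _ _ g) (h12 _ _ _ g') (h12 _ _ _ (h23 _ _ _ hT))
    obtain ⟨f, _, hf⟩ := hcov b hb e he hbe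
    obtain ⟨f', _, hf'⟩ := hcov c hc e he hce
    exact hF b c v v' e g g' hT ⟨f, hf⟩ ⟨f', hf'⟩
  -- nonempty support
  have hSne : S.Nonempty := by
    by_contra h
    rw [Finset.not_nonempty_iff_eq_empty] at h
    have : ∑ v, x v = 0 := Finset.sum_eq_zero fun v _ => by
      by_contra hv
      have := (memS v).2 hv
      rw [h] at this; simp at this
    linarith
  obtain ⟨v₀, hv₀⟩ := hSne
  have hsumS : ∀ f : V → ℝ, ∑ v ∈ S, x v * f v = ∑ v, x v * f v := by
    intro f
    refine Finset.sum_subset (Finset.subset_univ _) fun v _ hv => ?_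
    rw [memS] at hv; push Not at hv; rw [hv, zero_mul]
  have hΛ : triM τ x x x = w v₀ := by
    have h1 : triM τ x x x = ∑ v, x v * w v := by
      simp only [triM, hw, Finset.mul_sum]
      refine Finset.sum_congr rfl fun a _ => Finset.sum_congr rfl fun b _ =>
        Finset.sum_congr rfl fun c _ => ?_
      ring
    rw [h1, ← hsumS]
    have h2 : ∑ v ∈ S, x v * w v = ∑ v ∈ S, x v * w v₀ :=
      Finset.sum_congr rfl fun v hv => by rw [heq v₀ hv₀ v hv]
    rw [h2, hsumS (fun _ => w v₀), ← Finset.sum_mul, hx1, one_mul]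
  rw [hΛ]
  have hsum : (S.card : ℝ) * w v₀ ≤ 1 - ∑ v, x v ^ 2 := by
    have h1 : (S.card : ℝ) * w v₀ = ∑ v ∈ S, w v := by
      rw [Finset.sum_congr rfl fun v hv => heq v₀ hv₀ v hv]; simp
    have h2 : ∑ v ∈ S, w v = ∑ b, ∑ c, (∑ v ∈ S, τ v b c) * (x b * x c) := by
      simp only [hw]
      rw [Finset.sum_comm]
      refine Finset.sum_congr rfl fun b _ => ?_
      rw [Finset.sum_comm]
      refine Finset.sum_congr rfl fun c _ => ?_
      rw [Finset.sum_mul]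
      refine Finset.sum_congr rfl fun v _ => ?_
      ring
    have h3 : ∑ b, ∑ c, (∑ v ∈ S, τ v b c) * (x b * x c)
        ≤ ∑ b, ∑ c, ((x b * x c) - if b = c then x b * x c else 0) := by
      refine Finset.sum_le_sum fun b _ => Finset.sum_le_sum fun c _ => ?_
      by_cases hbc : b = c
      · subst hbc
        have : ∑ v ∈ S, τ v b b = 0 := Finset.sum_eq_zero fun v _ => by rw [t12, t23, t0]
        rw [this]; simp
      rw [if_neg hbc, sub_zero]
      by_cases hb : b ∈ S
      swap
      · rw [memS] at hb; push Not at hb; simp [hb]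
      by_cases hc : c ∈ S
      swap
      · rw [memS] at hc; push Not at hc; simp [hc]
      have : ∑ v ∈ S, τ v b c ≤ 1 := by
        simp only [hτ]
        rw [Finset.sum_boole]
        have : (S.filter fun v => T v b c).card ≤ 1 := by
          rw [Finset.card_le_one]
          intro v hv v' hv'
          rw [Finset.mem_filter] at hv hv'
          exact huniq b hb c hc v hv.1 v' hv'.1 hv.2 hv'.2
        exact_mod_cast this
      have h0 := mul_nonneg (hxn b) (hxn c)
      nlinarith
    have h4 : ∑ b, ∑ c, ((x b * x c) - if b = c then x b * x c else 0) = 1 - ∑ v, x v ^ 2 := by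
      simp only [Finset.sum_sub_distrib, ← Finset.mul_sum, hx1]
      simp [hx1, sq]
    linarith
  have hcs : (1:ℝ) ≤ S.card * ∑ v, x v ^ 2 := by
    have h1 := sq_sum_le_card_mul_sum_sq (s := S) (f := x)
    have h2 : ∑ v ∈ S, x v = 1 := by
      have := hsumS (fun _ => 1); simpa [hx1] using this
    have h3 : ∑ v ∈ S, x v ^ 2 = ∑ v, x v ^ 2 := by
      have := hsumS x; simpa [sq] using this
    rw [h2, h3] at h1
    linarith
  have hs1 : 1 ≤ S.card := Finset.card_pos.2 ⟨v₀, hv₀⟩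
  have hs : (S.card : ℝ) ^ 2 * w v₀ ≤ S.card - 1 := by
    have : (0:ℝ) ≤ S.card := by positivity
    nlinarith [mul_le_mul_of_nonneg_left hsum this]
  by_cases h1 : S.card = 1
  · rw [h1] at hs; norm_num at hs; linarith
  have h3 : 3 ≤ S.card := by
    obtain ⟨u, hu, v, hv, huv⟩ := Finset.one_lt_card.1 (by omega : 1 < S.card)
    obtain ⟨c, hc, hT⟩ := hcov u hu v hv huv
    have h13 := hne _ _ _ (h23 _ _ _ hT)
    have h23' := hne _ _ _ (h23 _ _ _ (h12 _ _ _ hT))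
    have : ({u, v, c} : Finset V).card = 3 := Finset.card_eq_three.2 ⟨u, v, c, huv, h13, h23', rfl⟩
    rw [← this]
    refine Finset.card_le_card ?_
    intro a ha
    simp only [Finset.mem_insert, Finset.mem_singleton] at ha
    rcases ha with rfl | rfl | rfl <;> assumption
  have h3' : (3:ℝ) ≤ S.card := by exact_mod_cast h3
  by_contra hcon
  push Not at hcon
  have hp : (0:ℝ) < (S.card:ℝ) ^ 2 := by positivity
  nlinarith [mul_lt_mul_of_pos_left hcon hp]

end Lag

section Clean

lemma clean_exists {n : ℕ} (H : Finset (Finset (Fin n))) :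
    ∃ H' ⊆ H, H.card ≤ H'.card + 7 * n ^ 2 ∧ ∀ u v, u ≠ v → (∃ w, {u, v, w} ∈ H') →
      7 ≤ (Finset.univ.filter fun w => {u, v, w} ∈ H').card ∨ ∃ e ∈ H', e.card ≠ 3 := by
  let U : Finset (Finset (Fin n)) → Finset (Fin n × Fin n) := fun G =>
    Finset.univ.filter fun p => ∀ e ∈ G, ¬ (p.1 ∈ e ∧ p.2 ∈ e)
  obtain ⟨H', hH', hm⟩ := Finset.exists_max_image H.powerset (fun G => G.card + 7 * (U G).card)
    ⟨H, Finset.mem_powerset_self H⟩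
  rw [Finset.mem_powerset] at hH'
  refine ⟨H', hH', ?_, ?_⟩
  · have h1 := hm H (Finset.mem_powerset_self H)
    have h2 : (U H').card ≤ n ^ 2 := by
      refine (Finset.card_le_univ _).trans ?_
      simp [sq]
    omega
  · rintro u v huv ⟨w, hw⟩
    by_contra hcon
    push Not at hcon
    obtain ⟨hc, h3⟩ := hcon
    let G := H'.filter fun e => ¬ (u ∈ e ∧ v ∈ e)
    have hG : G ⊆ H' := Finset.filter_subset _ _
    have h1 := hm G (Finset.mem_powerset.2 (hG.trans hH'))
    have hU : (U H').card < (U G).card := by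
      apply Finset.card_lt_card
      rw [Finset.ssubset_iff_of_subset]
      · refine ⟨(u, v), ?_, ?_⟩
        · simp only [U, G, Finset.mem_filter, Finset.mem_univ, true_and]
          exact fun e he => he.2
        · simp only [U, Finset.mem_filter, Finset.mem_univ, true_and]
          intro h
          exact h _ hw (by simp)
      · intro p hp
        simp only [U, Finset.mem_filter, Finset.mem_univ, true_and] at hp ⊢
        exact fun e he => hp e (hG he)
    have hD : H'.card ≤ G.card + (Finset.univ.filter fun w => {u, v, w} ∈ H').card := by
      have h2 := Finset.card_filter_add_card_filter_not (s := H') (fun e => u ∈ e ∧ v ∈ e)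
      have h4 : (H'.filter fun e => u ∈ e ∧ v ∈ e) ⊆
          (Finset.univ.filter fun w => ({u, v, w} : Finset (Fin n)) ∈ H').image
            (fun w => {u, v, w}) := by
        intro e he
        rw [Finset.mem_filter] at he
        obtain ⟨he, hu, hv⟩ := he
        have hsub : ({u, v} : Finset (Fin n)) ⊆ e := by
          intro a ha
          simp only [Finset.mem_insert, Finset.mem_singleton] at ha
          rcases ha with rfl | rfl <;> assumption
        have hcd : (e \ {u, v}).card = 1 := by
          rw [Finset.card_sdiff_of_subset hsub, h3 e he, Finset.card_pair huv]
        obtain ⟨z, hz⟩ := Finset.card_eq_one.1 hcd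
        have hez : ({u, v, z} : Finset (Fin n)) = e := by
          rw [← Finset.union_sdiff_of_subset hsub, hz]
          ext a; simp [or_assoc]
        rw [Finset.mem_image]
        refine ⟨z, ?_, hez⟩
        simp [hez, he]
      have h5 := (Finset.card_le_card h4).trans Finset.card_image_le
      change H'.card ≤ (H'.filter fun e => ¬ (u ∈ e ∧ v ∈ e)).card + _
      omega
    omega

set_option maxHeartbeats 1000000 in
lemma six_count {n : ℕ} (H : Finset (Finset (Fin n))) (h3 : ∀ e ∈ H, e.card = 3) :
    6 * H.card ≤ (Finset.univ.filter fun p : Fin n × Fin n × Fin n =>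
      {p.1, p.2.1, p.2.2} ∈ H).card := by
  rw [Finset.card_eq_sum_card_fiberwise (f := fun p : Fin n × Fin n × Fin n =>
    ({p.1, p.2.1, p.2.2} : Finset (Fin n))) (t := H)]
  · rw [mul_comm, ← smul_eq_mul]
    refine Finset.card_nsmul_le_sum _ _ _ fun e he => ?_
    obtain ⟨a, b, c, hab, hac, hbc, rfl⟩ := Finset.card_eq_three.1 (h3 e he)
    have : ({(a,b,c),(a,c,b),(b,a,c),(b,c,a),(c,a,b),(c,b,a)} :
      Finset (Fin n × Fin n × Fin n)).card = 6 := by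
      simp [hab, hac, hbc, hab.symm, hac.symm, hbc.symm]
    rw [← this]
    refine Finset.card_le_card ?_
    have e1 : ({a,c,b} : Finset (Fin n)) = {a,b,c} := by rw [Finset.pair_comm]
    have e2 : ({b,a,c} : Finset (Fin n)) = {a,b,c} := by rw [Finset.insert_comm]
    have e3 : ({b,c,a} : Finset (Fin n)) = {a,b,c} := by rw [Finset.pair_comm c a, Finset.insert_comm b a]
    have e4 : ({c,a,b} : Finset (Fin n)) = {a,b,c} := by rw [Finset.insert_comm c a, Finset.pair_comm c b]
    have e5 : ({c,b,a} : Finset (Fin n)) = {a,b,c} := by rw [Finset.pair_comm b a, Finset.insert_comm c a, Finset.pair_comm c b]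
    intro p hp
    simp only [Finset.mem_insert, Finset.mem_singleton] at hp
    simp only [Finset.mem_filter, Finset.mem_univ, true_and]
    rcases hp with rfl | rfl | rfl | rfl | rfl | rfl <;>
      first
      | exact ⟨he, rfl⟩
      | exact ⟨e1.symm ▸ he, e1⟩
      | exact ⟨e2.symm ▸ he, e2⟩
      | exact ⟨e3.symm ▸ he, e3⟩
      | exact ⟨e4.symm ▸ he, e4⟩
      | exact ⟨e5.symm ▸ he, e5⟩
  · intro p hp
    simpa using hp

lemma exists_avoid {n : ℕ} (s t : Finset (Fin n)) (hs : 7 ≤ s.card) (ht : t.card ≤ 6) :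
    ∃ a ∈ s, a ∉ t := by
  by_contra h
  push Not at h
  have := Finset.card_le_card (show s ⊆ t from h)
  omega

set_option maxHeartbeats 2000000 in
lemma upper_bound {n : ℕ} (hn : 0 < n) (H : Set (Finset (Fin n))) (h3 : IsThreeGraph H)
    (hK : ¬ ContainsCopy K4minus H) (hF : ¬ ContainsCopy Fstar H) :
    (H.ncard : ℝ) ≤ (n:ℝ) ^ 3 / 27 + 7 * (n:ℝ) ^ 2 := by
  obtain ⟨H', hsub, hcard, hcl⟩ := clean_exists H.toFinset
  have hin : ∀ e ∈ H', e ∈ H := fun e he => by simpa using hsub he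
  have h3' : ∀ e ∈ H', e.card = 3 := fun e he => h3 e (hin e he)
  have hcod : ∀ u v, u ≠ v → (∃ w, {u, v, w} ∈ H') →
      7 ≤ (Finset.univ.filter fun w => {u, v, w} ∈ H').card := by
    intro u v huv hw
    rcases hcl u v huv hw with h | ⟨e, he, he3⟩
    · exact h
    · exact absurd (h3' e he) he3
  let T : Fin n → Fin n → Fin n → Prop := fun a b c => {a, b, c} ∈ H'
  have h12 : ∀ a b c, T a b c → T b a c := fun a b c h => by
    have : ({b,a,c} : Finset (Fin n)) = {a,b,c} := by rw [Finset.insert_comm]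
    simpa only [T, this] using h
  have h23 : ∀ a b c, T a b c → T a c b := fun a b c h => by
    have : ({a,c,b} : Finset (Fin n)) = {a,b,c} := by rw [Finset.pair_comm]
    simpa only [T, this] using h
  have hne : ∀ a b c, T a b c → a ≠ b := by
    rintro a b c h rfl
    have := h3' _ h
    rw [Finset.insert_eq_of_mem (by simp)] at this
    have := Finset.card_le_two (a := a) (b := c)
    omega
  have hne13 : ∀ a b c, T a b c → a ≠ c := fun a b c h => hne _ _ _ (h23 _ _ _ h)
  have hne23 : ∀ a b c, T a b c → b ≠ c := fun a b c h => hne13 _ _ _ (h12 _ _ _ h)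
  have hKK : ∀ a b c d, T a b c → T a b d → T a c d → False := by
    intro a b c d h1 h2 h4
    apply hK
    refine ⟨![a, b, c, d], ?_, ?_⟩
    · have := hne _ _ _ h1; have := hne13 _ _ _ h1; have := hne23 _ _ _ h1
      have := hne13 _ _ _ h2; have := hne23 _ _ _ h2; have := hne23 _ _ _ h4
      intro i j hij
      fin_cases i <;> fin_cases j <;> simp_all
    · intro e he
      simp only [K4minus, Set.mem_insert_iff, Set.mem_singleton_iff] at he
      rcases he with rfl | rfl | rfl
      · convert hin _ h1 using 1; ext y; simp [eq_comm]
      · convert hin _ h2 using 1; ext y; simp [eq_comm]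
      · convert hin _ h4 using 1; ext y; simp [eq_comm]
  have hFF : ∀ a b c d e, T a b c → T a b d → T c d e → (∃ f, T a e f) → (∃ g, T b e g) →
      False := by
    intro a b c d e h1 h2 h4 hf hg
    have ae : a ≠ e := by obtain ⟨f, hf⟩ := hf; exact hne _ _ _ hf
    have be : b ≠ e := by obtain ⟨f, hf⟩ := hg; exact hne _ _ _ hf
    obtain ⟨f, hf, hfa⟩ := exists_avoid _ {b, c, d} (hcod a e ae hf)
      (Finset.card_le_three.trans (by norm_num))
    obtain ⟨g, hg, hga⟩ := exists_avoid _ {a, c, d, f} (hcod b e be hg)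
      (Finset.card_le_four.trans (by norm_num))
    replace hf : T a e f := by simpa using hf
    replace hg : T b e g := by simpa using hg
    simp only [Finset.mem_insert, Finset.mem_singleton, not_or] at hfa hga
    obtain ⟨fb, fc, fd⟩ := hfa
    obtain ⟨ga, gc, gd, gf⟩ := hga
    apply hF
    refine ⟨![a, b, c, d, e, f, g], ?_, ?_⟩
    · have ab := hne _ _ _ h1; have ac := hne13 _ _ _ h1; have bc := hne23 _ _ _ h1
      have ad := hne13 _ _ _ h2; have bd := hne23 _ _ _ h2
      have cd := hne _ _ _ h4; have ce := hne13 _ _ _ h4; have de := hne23 _ _ _ h4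
      have af := hne13 _ _ _ hf; have ef := hne23 _ _ _ hf
      have bg := hne13 _ _ _ hg; have eg := hne23 _ _ _ hg
      have : (![a, b, c, d, e, f, g] : Fin 7 → Fin n).Injective := by
        rw [← List.nodup_ofFn]
        simp only [List.ofFn_succ, List.ofFn_zero]
        simp [*, Ne.symm ga, Ne.symm gc, Ne.symm gd, Ne.symm gf, Ne.symm fb, Ne.symm fc,
          Ne.symm fd]
      exact this
    · intro s hs
      simp only [Fstar, Set.mem_insert_iff, Set.mem_singleton_iff] at hs
      rcases hs with rfl | rfl | rfl | rfl | rfl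
      · convert hin _ h1 using 1; ext y; simp [eq_comm]
      · convert hin _ h2 using 1; ext y; simp [eq_comm]
      · convert hin _ h4 using 1; ext y; simp [eq_comm]
      · convert hin _ hf using 1; ext y; simp [eq_comm]
      · convert hin _ hg using 1; ext y; simp [eq_comm]
  have hn' : (0:ℝ) < n := by exact_mod_cast hn
  have hlag := lag_bound T h12 h23 hne hKK hFF (fun _ => 1 / (n:ℝ))
    ⟨fun _ => by positivity, by
      rw [Finset.sum_const, Finset.card_univ, Fintype.card_fin, nsmul_eq_mul]; field_simp⟩
  have hcount : triM (fun a b c => if T a b c then (1:ℝ) else 0) (fun _ => 1 / (n:ℝ))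
      (fun _ => 1 / (n:ℝ)) (fun _ => 1 / (n:ℝ)) =
      ((Finset.univ.filter fun p : Fin n × Fin n × Fin n =>
      {p.1, p.2.1, p.2.2} ∈ H').card : ℝ) * (1 / (n:ℝ)) ^ 3 := by
    rw [← Finset.sum_boole, Fintype.sum_prod_type, Finset.sum_mul]
    simp only [triM, Fintype.sum_prod_type, Finset.sum_mul]
    refine Finset.sum_congr rfl fun a _ => Finset.sum_congr rfl fun b _ =>
      Finset.sum_congr rfl fun c _ => ?_
    simp only [T]
    ring
  replace hlag : ((Finset.univ.filter fun p : Fin n × Fin n × Fin n =>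
      {p.1, p.2.1, p.2.2} ∈ H').card : ℝ) * (1 / (n:ℝ)) ^ 3 ≤ 2 / 9 := by
    rw [← hcount]; convert hlag
  have h6 : (6:ℝ) * H'.card ≤ ((Finset.univ.filter fun p : Fin n × Fin n × Fin n =>
      {p.1, p.2.1, p.2.2} ∈ H').card : ℝ) := by exact_mod_cast six_count H' h3'
  have hl2 : ((Finset.univ.filter fun p : Fin n × Fin n × Fin n =>
      {p.1, p.2.1, p.2.2} ∈ H').card : ℝ) ≤ 2 / 9 * (n:ℝ) ^ 3 := by
    rw [one_div, inv_pow, ← div_eq_mul_inv, div_le_iff₀ (by positivity)] at hlag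
    exact hlag
  have hc : (H.ncard : ℝ) ≤ H'.card + 7 * (n:ℝ) ^ 2 := by
    rw [Set.ncard_eq_toFinset_card']
    exact_mod_cast hcard
  linarith

end Clean

section Lower

lemma lower_bound (n : ℕ) : ∃ H : Set (Finset (Fin n)), IsThreeGraph H ∧
    ¬ ContainsCopy K4minus H ∧ ¬ ContainsCopy Fstar H ∧ (n / 3) ^ 3 ≤ H.ncard := by
  let H : Set (Finset (Fin n)) :=
    {e | e.card = 3 ∧ ∀ a ∈ e, ∀ b ∈ e, a ≠ b → a.val % 3 ≠ b.val % 3}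
  refine ⟨H, fun e he => he.1, ?_, ?_, ?_⟩
  · rintro ⟨φ, hφ, h⟩
    have h1 := (h {0,1,2} (by simp [K4minus])).2
    have h2 := (h {0,1,3} (by simp [K4minus])).2
    have h4 := (h {0,2,3} (by simp [K4minus])).2
    have a1 := h1 (φ 0) (by simp) (φ 1) (by simp) (hφ.ne (by decide))
    have a2 := h1 (φ 0) (by simp) (φ 2) (by simp) (hφ.ne (by decide))
    have a3 := h1 (φ 1) (by simp) (φ 2) (by simp) (hφ.ne (by decide))
    have a4 := h2 (φ 0) (by simp) (φ 3) (by simp) (hφ.ne (by decide))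
    have a5 := h2 (φ 1) (by simp) (φ 3) (by simp) (hφ.ne (by decide))
    have a6 := h4 (φ 2) (by simp) (φ 3) (by simp) (hφ.ne (by decide))
    omega
  · rintro ⟨φ, hφ, h⟩
    have h1 := (h {0,1,2} (by simp [Fstar])).2
    have h2 := (h {0,1,3} (by simp [Fstar])).2
    have h4 := (h {2,3,4} (by simp [Fstar])).2
    have a1 := h1 (φ 0) (by simp) (φ 1) (by simp) (hφ.ne (by decide))
    have a2 := h1 (φ 0) (by simp) (φ 2) (by simp) (hφ.ne (by decide))
    have a3 := h1 (φ 1) (by simp) (φ 2) (by simp) (hφ.ne (by decide))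
    have a4 := h2 (φ 0) (by simp) (φ 3) (by simp) (hφ.ne (by decide))
    have a5 := h2 (φ 1) (by simp) (φ 3) (by simp) (hφ.ne (by decide))
    have a6 := h4 (φ 2) (by simp) (φ 3) (by simp) (hφ.ne (by decide))
    omega
  · let m := n / 3
    have hm : 3 * m ≤ n := Nat.mul_div_le n 3
    let g : Fin m × Fin m × Fin m → Finset (Fin n) := fun p =>
      {⟨3 * p.1.val, by omega⟩, ⟨3 * p.2.1.val + 1, by omega⟩, ⟨3 * p.2.2.val + 2, by omega⟩}
    have hg : Function.Injective g := by
      rintro ⟨i, j, k⟩ ⟨i', j', k'⟩ h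
      have m1 : (⟨3 * i.val, by omega⟩ : Fin n) ∈ g (i', j', k') := by rw [← h]; simp [g]
      have m2 : (⟨3 * j.val + 1, by omega⟩ : Fin n) ∈ g (i', j', k') := by rw [← h]; simp [g]
      have m3 : (⟨3 * k.val + 2, by omega⟩ : Fin n) ∈ g (i', j', k') := by rw [← h]; simp [g]
      simp only [g, Finset.mem_insert, Finset.mem_singleton, Fin.mk.injEq] at m1 m2 m3
      simp only [Prod.mk.injEq, Fin.ext_iff]
      omega
    have hr : Set.range g ⊆ H := by
      rintro _ ⟨⟨i, j, k⟩, rfl⟩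
      refine ⟨?_, ?_⟩
      · refine Finset.card_eq_three.2 ⟨_, _, _, ?_, ?_, ?_, rfl⟩ <;>
        · simp only [ne_eq, Fin.mk.injEq]; omega
      · intro a ha b hb hab
        simp only [g, Finset.mem_insert, Finset.mem_singleton] at ha hb
        rcases ha with rfl | rfl | rfl <;> rcases hb with rfl | rfl | rfl <;>
          first
          | exact absurd rfl hab
          | (simp only; omega)
    have hc : (Set.range g).ncard = m ^ 3 := by
      rw [← Set.image_univ, Set.ncard_image_of_injective _ hg, Set.ncard_univ]
      simp; ring
    rw [← hc]
    exact Set.ncard_le_ncard hr (Set.toFinite _)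

end Lower

/-- The Turán density of the family `{K4⁻, F*}` equals `2/9`. -/
theorem turan_density_K4minus_Fstar :
    ∀ ε : ℝ, 0 < ε → ∃ N : ℕ, ∀ n : ℕ, N ≤ n →
      (2 / 9 - ε) * (n.choose 3 : ℝ) ≤ (exKF n : ℝ) ∧
        (exKF n : ℝ) ≤ (2 / 9 + ε) * (n.choose 3 : ℝ) := by
  intro ε hε
  obtain ⟨N, hN⟩ := exists_nat_ge (100 / ε)
  refine ⟨N + 6, fun n hn => ?_⟩
  have hn6 : (6:ℝ) ≤ n := by exact_mod_cast (by omega : 6 ≤ n)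
  have hnε : 100 ≤ ε * n := by
    have : (N:ℝ) ≤ n := by exact_mod_cast (by omega : N ≤ n)
    have h : 100 / ε ≤ n := hN.trans this
    rw [div_le_iff₀ hε] at h; linarith
  have hch : (n.choose 3 : ℝ) = n * (n - 1) * (n - 2) / 6 := by
    rw [Nat.cast_choose_eq_descPochhammer_div]
    simp [descPochhammer_succ_right, Nat.factorial]
  obtain ⟨H₀, a1, a2, a3, a4⟩ := lower_bound n
  have hbdd : BddAbove {k | ∃ H : Set (Finset (Fin n)), IsThreeGraph H ∧
      ¬ ContainsCopy K4minus H ∧ ¬ ContainsCopy Fstar H ∧ H.ncard = k} := by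
    refine ⟨Nat.card (Finset (Fin n)), ?_⟩
    rintro k ⟨H, _, _, _, rfl⟩
    exact Set.ncard_le_card H
  constructor
  · have h1 : H₀.ncard ≤ exKF n := le_csSup hbdd ⟨H₀, a1, a2, a3, rfl⟩
    have h2 : (((n / 3 : ℕ) : ℝ)) ^ 3 ≤ exKF n := by exact_mod_cast a4.trans h1
    have h3 : ((n:ℝ) - 2) / 3 ≤ ((n / 3 : ℕ) : ℝ) := by
      have : n ≤ 3 * (n / 3) + 2 := by omega
      have : (n:ℝ) ≤ 3 * ((n / 3 : ℕ) : ℝ) + 2 := by exact_mod_cast this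
      linarith
    have h4 : (((n:ℝ) - 2) / 3) ^ 3 ≤ ((n / 3 : ℕ) : ℝ) ^ 3 :=
      pow_le_pow_left₀ (by linarith) h3 3
    refine le_trans ?_ (h4.trans h2)
    rw [hch]
    have h5 : (3 * (n:ℝ) - 4) / 27 ≤ ε * n * (n - 1) / 6 := by nlinarith
    have h6 := mul_le_mul_of_nonneg_right h5 (by linarith : (0:ℝ) ≤ n - 2)
    nlinarith
  · have h1 : ∃ H : Set (Finset (Fin n)), IsThreeGraph H ∧
      ¬ ContainsCopy K4minus H ∧ ¬ ContainsCopy Fstar H ∧ H.ncard = exKF n :=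
      Nat.sSup_mem (s := {k | ∃ H : Set (Finset (Fin n)), IsThreeGraph H ∧
      ¬ ContainsCopy K4minus H ∧ ¬ ContainsCopy Fstar H ∧ H.ncard = k})
        ⟨H₀.ncard, H₀, a1, a2, a3, rfl⟩ hbdd
    obtain ⟨H, b1, b2, b3, b4⟩ := h1
    have h2 := upper_bound (by omega) H b1 b2 b3
    rw [b4] at h2
    refine h2.trans ?_
    rw [hch]
    have h3 : (n:ℝ) ^ 2 / 2 ≤ (n - 1) * (n - 2) := by nlinarith
    have h4 : 100 * ((n:ℝ) ^ 2 / 2) ≤ ε * n * ((n - 1) * (n - 2)) :=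
      mul_le_mul hnε h3 (by positivity) (by positivity)
    nlinarith
end

section
/- Let M be a 3×3 matrix with entries in {0,1} such that for every permutation σ of {1,2,3} one has M_{1,σ(1)} + M_{2,σ(2)} + M_{3,σ(3)} = 1 (as integers). Then either there is a row i with M_{i,j} = 1 for all j and M_{i',j} = 0 for all i' ≠ i and all j, or there is a column j with M_{i,j} = 1 for all i and M_{i,j'} = 0 for all j' ≠ j and all i. -/
set_option maxHeartbeats 2000000 in
/-- If a 3×3 zero-one matrix has every permutation-diagonal sum equal to 1, then its
three 1s fill a single row (with all other entries 0) or a single column. -/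
theorem matrix_three_by_three (M : Fin 3 → Fin 3 → ℤ)
    (h01 : ∀ i j, M i j = 0 ∨ M i j = 1)
    (hdiag : ∀ σ : Equiv.Perm (Fin 3), M 0 (σ 0) + M 1 (σ 1) + M 2 (σ 2) = 1) :
    (∃ i, (∀ j, M i j = 1) ∧ ∀ i', i' ≠ i → ∀ j, M i' j = 0) ∨
      (∃ j, (∀ i, M i j = 1) ∧ ∀ j', j' ≠ j → ∀ i, M i j' = 0) := by
  have e1 : M 0 0 + M 1 1 + M 2 2 = 1 := hdiag 1
  have e2 : M 0 1 + M 1 0 + M 2 2 = 1 := hdiag (Equiv.swap 0 1)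
  have e3 : M 0 2 + M 1 1 + M 2 0 = 1 := hdiag (Equiv.swap 0 2)
  have e4 : M 0 0 + M 1 2 + M 2 1 = 1 := hdiag (Equiv.swap 1 2)
  have e5 : M 0 1 + M 1 2 + M 2 0 = 1 := hdiag (Equiv.swap 0 1 * Equiv.swap 1 2)
  have e6 : M 0 2 + M 1 0 + M 2 1 = 1 := hdiag (Equiv.swap 1 2 * Equiv.swap 0 1)
  clear hdiag
  have a := h01 0 0
  have b := h01 0 1
  have c := h01 0 2
  have d := h01 1 0
  have e := h01 1 1
  have f := h01 1 2
  have g := h01 2 0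
  have h := h01 2 1
  have k := h01 2 2
  clear h01
  have key : (M 0 0 = 1 ∧ M 0 1 = 1 ∧ M 0 2 = 1) ∨ (M 1 0 = 1 ∧ M 1 1 = 1 ∧ M 1 2 = 1) ∨
      (M 2 0 = 1 ∧ M 2 1 = 1 ∧ M 2 2 = 1) ∨ (M 0 0 = 1 ∧ M 1 0 = 1 ∧ M 2 0 = 1) ∨
      (M 0 1 = 1 ∧ M 1 1 = 1 ∧ M 2 1 = 1) ∨ (M 0 2 = 1 ∧ M 1 2 = 1 ∧ M 2 2 = 1) := by
    rcases a with a | a <;> rcases b with b | b <;> rcases c with c | c <;>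
      rcases d with d | d <;> rcases g with g | g <;> omega
  rcases key with q | q | q | q | q | q
  · refine Or.inl ⟨0, ?_, ?_⟩ <;> simp [Fin.forall_fin_succ] <;> omega
  · refine Or.inl ⟨1, ?_, ?_⟩ <;> simp [Fin.forall_fin_succ] <;> omega
  · refine Or.inl ⟨2, ?_, ?_⟩ <;> simp [Fin.forall_fin_succ] <;> omega
  · refine Or.inr ⟨0, ?_, ?_⟩ <;> simp [Fin.forall_fin_succ] <;> omega
  · refine Or.inr ⟨1, ?_, ?_⟩ <;> simp [Fin.forall_fin_succ] <;> omega
  · refine Or.inr ⟨2, ?_, ?_⟩ <;> simp [Fin.forall_fin_succ] <;> omega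
end

section
/- Let M be a 4×3 matrix with entries in {0,1}, rows indexed by a, b, c, d and columns by {1,2,3}. Suppose that for each of the three row-triples {a,b,c}, {a,b,d}, {a,c,d}, the corresponding 3×3 submatrix satisfies: for every bijection σ from the row-triple to {1,2,3}, the sum of the three entries M_{r,σ(r)} over rows r in the triple equals 1 (as integers). Then one of the following holds: (i) every entry in row a is 1 and every entry in rows b, c, d is 0; or (ii) there is a column j with every entry in column j equal to 1 and all entries in the other two columns equal to 0. -/
set_option maxHeartbeats 2000000 in
/-- Rows are `a=0, b=1, c=2, d=3`.  If for each of the row-triples `abc`, `abd`, `acd`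
every bijection `σ` from the triple to the three columns gives
`∑ M r (σ r) = 1`, then either row `a` is all 1s and the other rows are all 0s, or some
column is all 1s and the other columns are all 0s. -/
theorem matrix_four_by_three (M : Fin 4 → Fin 3 → ℤ)
    (h01 : ∀ i j, M i j = 0 ∨ M i j = 1)
    (hdiag : ∀ S ∈ ({{0, 1, 2}, {0, 1, 3}, {0, 2, 3}} : Set (Finset (Fin 4))),
      ∀ σ : Fin 4 → Fin 3, Set.InjOn σ ↑S → ∑ r ∈ S, M r (σ r) = 1) :
    ((∀ j, M 0 j = 1) ∧ ∀ i, i ≠ 0 → ∀ j, M i j = 0) ∨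
      (∃ j, (∀ i, M i j = 1) ∧ ∀ j', j' ≠ j → ∀ i, M i j' = 0) := by
  have A : ∀ x y z : Fin 3, x ≠ y → x ≠ z → y ≠ z → M 0 x + M 1 y + M 2 z = 1 := by
    intro x y z h1 h2 h3
    have h := hdiag {0, 1, 2} (by simp) ![x, y, z, x] (by
      clear hdiag h01
      intro i hi j hj hij
      fin_cases i <;> fin_cases j <;> simp_all)
    simpa [add_assoc] using h
  have B : ∀ x y z : Fin 3, x ≠ y → x ≠ z → y ≠ z → M 0 x + M 1 y + M 3 z = 1 := by
    intro x y z h1 h2 h3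
    have h := hdiag {0, 1, 3} (by simp) ![x, y, x, z] (by
      clear hdiag h01
      intro i hi j hj hij
      fin_cases i <;> fin_cases j <;> simp_all)
    simpa [add_assoc] using h
  have C : ∀ x y z : Fin 3, x ≠ y → x ≠ z → y ≠ z → M 0 x + M 2 y + M 3 z = 1 := by
    intro x y z h1 h2 h3
    have h := hdiag {0, 2, 3} (by simp) ![x, x, y, z] (by
      clear hdiag h01
      intro i hi j hj hij
      fin_cases i <;> fin_cases j <;> simp_all)
    simpa [add_assoc] using h
  have A012 := A 0 1 2 (by decide) (by decide) (by decide)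
  have A021 := A 0 2 1 (by decide) (by decide) (by decide)
  have A102 := A 1 0 2 (by decide) (by decide) (by decide)
  have A120 := A 1 2 0 (by decide) (by decide) (by decide)
  have A201 := A 2 0 1 (by decide) (by decide) (by decide)
  have A210 := A 2 1 0 (by decide) (by decide) (by decide)
  have B012 := B 0 1 2 (by decide) (by decide) (by decide)
  have B021 := B 0 2 1 (by decide) (by decide) (by decide)
  have B102 := B 1 0 2 (by decide) (by decide) (by decide)
  have B120 := B 1 2 0 (by decide) (by decide) (by decide)
  have B201 := B 2 0 1 (by decide) (by decide) (by decide)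
  have B210 := B 2 1 0 (by decide) (by decide) (by decide)
  have C012 := C 0 1 2 (by decide) (by decide) (by decide)
  have C021 := C 0 2 1 (by decide) (by decide) (by decide)
  have C102 := C 1 0 2 (by decide) (by decide) (by decide)
  have C120 := C 1 2 0 (by decide) (by decide) (by decide)
  have C201 := C 2 0 1 (by decide) (by decide) (by decide)
  have C210 := C 2 1 0 (by decide) (by decide) (by decide)
  clear hdiag A B C
  have key : (M 0 0 = 1 ∧ M 0 1 = 1 ∧ M 0 2 = 1 ∧ M 1 0 = 0 ∧ M 1 1 = 0 ∧ M 1 2 = 0 ∧ M 2 0 = 0 ∧ M 2 1 = 0 ∧ M 2 2 = 0 ∧ M 3 0 = 0 ∧ M 3 1 = 0 ∧ M 3 2 = 0) ∨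
    (M 0 0 = 1 ∧ M 1 0 = 1 ∧ M 2 0 = 1 ∧ M 3 0 = 1 ∧ M 0 1 = 0 ∧ M 1 1 = 0 ∧ M 2 1 = 0 ∧ M 3 1 = 0 ∧ M 0 2 = 0 ∧ M 1 2 = 0 ∧ M 2 2 = 0 ∧ M 3 2 = 0) ∨
    (M 0 0 = 0 ∧ M 1 0 = 0 ∧ M 2 0 = 0 ∧ M 3 0 = 0 ∧ M 0 1 = 1 ∧ M 1 1 = 1 ∧ M 2 1 = 1 ∧ M 3 1 = 1 ∧ M 0 2 = 0 ∧ M 1 2 = 0 ∧ M 2 2 = 0 ∧ M 3 2 = 0) ∨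
    (M 0 0 = 0 ∧ M 1 0 = 0 ∧ M 2 0 = 0 ∧ M 3 0 = 0 ∧ M 0 1 = 0 ∧ M 1 1 = 0 ∧ M 2 1 = 0 ∧ M 3 1 = 0 ∧ M 0 2 = 1 ∧ M 1 2 = 1 ∧ M 2 2 = 1 ∧ M 3 2 = 1) := by
    have b0 := h01 1 0
    have b1 := h01 1 1
    have c0 := h01 2 0
    have c1 := h01 2 1
    have d0 := h01 3 0
    have d1 := h01 3 1
    have d2 := h01 3 2
    have c2 := h01 2 2
    have b2 := h01 1 2
    rcases h01 0 0 with a0 | a0 <;> rcases h01 0 1 with a1 | a1 <;>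
      rcases h01 0 2 with a2 | a2 <;> clear h01 <;>
      rcases b0 with b0 | b0 <;> first | (exfalso; omega) | (left; omega) | (right; left; omega) | (right; right; left; omega) | (right; right; right; omega)
  clear h01
  rcases key with h | h | h | h
  · left
    refine ⟨fun j => ?_, fun i hi j => ?_⟩
    · fin_cases j <;> simp <;> omega
    · fin_cases i <;> first | exact absurd rfl hi | (fin_cases j <;> simp <;> omega)
  · refine Or.inr ⟨0, fun i => ?_, fun j hj i => ?_⟩
    · fin_cases i <;> simp <;> omega
    · fin_cases j <;> first | exact absurd rfl hj | (fin_cases i <;> simp <;> omega)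
  · refine Or.inr ⟨1, fun i => ?_, fun j hj i => ?_⟩
    · fin_cases i <;> simp <;> omega
    · fin_cases j <;> first | exact absurd rfl hj | (fin_cases i <;> simp <;> omega)
  · refine Or.inr ⟨2, fun i => ?_, fun j hj i => ?_⟩
    · fin_cases i <;> simp <;> omega
    · fin_cases j <;> first | exact absurd rfl hj | (fin_cases i <;> simp <;> omega)
end
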